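/- arXiv:1606.08621 — 2 statements merged into one kernel-verified Lean document; each statement's English description precedes it below -/
import Mathlib

section
/- Let G be the parallel composition of r > 2 paths of lengths k_1,...,k_r, where k_1 is odd and k_2,...,k_r are all even, and let X be the projective toric subset parameterized by G. Then reg(G) = (k_1 + k_2/2 + ... + k_r/2 − 1)(q−2). -/
open MvPolynomial

/-- A finite multigraph without loops: each edge `e` has two distinct endpoints
`fst e` and `snd e`.  Multiple edges with the same endpoints are allowed. -/
structure Multigraph (V E : Type) : Type where
  fst : E → V
  snd : E → V
  ne : ∀ e, fst e ≠ snd e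

namespace Multigraph

variable {V E : Type}

/-- Vertex `v` is an endpoint of the edge `e`. -/
def Incident (G : Multigraph V E) (v : V) (e : E) : Prop :=
  G.fst e = v ∨ G.snd e = v

instance (G : Multigraph V E) [DecidableEq V] (v : V) : DecidablePred (G.Incident v) :=
  fun e => inferInstanceAs (Decidable (G.fst e = v ∨ G.snd e = v))

/-- The degree of a vertex: the number of edges incident to it. -/
noncomputable def degree (G : Multigraph V E) (v : V) : ℕ :=
  Nat.card {e : E // G.Incident v e}

/-- The graph has no isolated vertices. -/
def NoIsolated (G : Multigraph V E) : Prop :=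
  ∀ v : V, ∃ e : E, G.Incident v e

variable (K : Type) [Field K] [Fintype K]

/-- The point of the affine torus associated with an assignment `x` of nonzero
scalars to the vertices: its coordinate at an edge `e = {v,w}` is `x v * x w`. -/
def point (G : Multigraph V E) (x : V → Kˣ) : E → K :=
  fun e => (x (G.fst e) : K) * (x (G.snd e) : K)

/-- The projective toric subset `X` parameterized by `G`, realized as the set of
`Kˣ`-orbits (i.e. projective points) of the points `G.point K x`, `x : V → Kˣ`. -/
def toricSet (G : Multigraph V E) : Set (Set (E → K)) :=
  Set.range fun x : V → Kˣ => MulAction.orbit Kˣ (G.point K x)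

/-- The vanishing ideal `I(X)` of the projective toric subset parameterized by `G`:
the ideal of all polynomials each of whose homogeneous components vanishes at the
point `G.point K x` for every `x : V → Kˣ`. -/
def vanishingIdeal (G : Multigraph V E) : Ideal (MvPolynomial E K) where
  carrier := {f | ∀ (x : V → Kˣ) (d : ℕ), eval (G.point K x) (homogeneousComponent d f) = 0}
  zero_mem' := by intro x d; simp
  add_mem' := by
    intro a b ha hb x d
    rw [map_add, map_add, ha x d, hb x d, add_zero]
  smul_mem' := by
    intro c f hf x n
    rw [smul_eq_mul, ← sum_homogeneousComponent f, Finset.mul_sum, map_sum, map_sum]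
    refine Finset.sum_eq_zero fun d _ => ?_
    nth_rewrite 1 [← sum_homogeneousComponent c]
    rw [Finset.sum_mul, map_sum, map_sum]
    refine Finset.sum_eq_zero fun e _ => ?_
    have h1 : (homogeneousComponent e c * homogeneousComponent d f).IsHomogeneous (e + d) :=
      (homogeneousComponent_isHomogeneous e c).mul (homogeneousComponent_isHomogeneous d f)
    rw [homogeneousComponent_of_mem ((mem_homogeneousSubmodule _ _).mpr h1)]
    split_ifs
    · rw [map_mul, hf x d, mul_zero]
    · simp

/-- The Hilbert function of `S/I(X)`: the dimension over `K` of the degree-`d`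
homogeneous component of the quotient, realized as the image of the space of
degree-`d` homogeneous polynomials in the quotient. -/
noncomputable def hilbert (G : Multigraph V E) (d : ℕ) : ℕ :=
  Module.finrank K
    ((homogeneousSubmodule E K d).map (Ideal.Quotient.mkₐ K (G.vanishingIdeal K)).toLinearMap)

/-- The regularity `reg G`: the least `d` such that the Hilbert function of `S/I(X)`
at `d` equals the number of points of `X`. -/
noncomputable def reg (G : Multigraph V E) : ℕ :=
  sInf {d : ℕ | G.hilbert K d = (G.toricSet K).ncard}

/-- The graph obtained from `G` by deleting a vertex `v` and all edges incident
to it. -/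
def deleteVert (G : Multigraph V E) (v : V) :
    Multigraph {w : V // w ≠ v} {e : E // ¬ G.Incident v e} where
  fst e := ⟨G.fst e.1, fun h => e.2 (Or.inl h)⟩
  snd e := ⟨G.snd e.1, fun h => e.2 (Or.inr h)⟩
  ne e h := G.ne e.1 (congrArg Subtype.val h)

/-- The graph obtained from `G` by identifying the vertex `v₂` with the vertex `v₁`:
the edges are the same, and every endpoint equal to `v₂` is replaced by `v₁`.
This requires that `{v₁, v₂}` is a non-edge of `G`, so that no loops are created. -/
def identifyVert [DecidableEq V] (G : Multigraph V E) (v₁ v₂ : V) (h12 : v₁ ≠ v₂)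
    (h : ∀ e, ¬ (G.Incident v₁ e ∧ G.Incident v₂ e)) :
    Multigraph {w : V // w ≠ v₂} E where
  fst e := ⟨if G.fst e = v₂ then v₁ else G.fst e, by split_ifs with hh; exacts [h12, hh]⟩
  snd e := ⟨if G.snd e = v₂ then v₁ else G.snd e, by split_ifs with hh; exacts [h12, hh]⟩
  ne := by
    intro e heq
    rw [Subtype.ext_iff] at heq
    simp only at heq
    split_ifs at heq with h1 h2 h2
    · exact G.ne e (h1.trans h2.symm)
    · exact h e ⟨Or.inr heq.symm, Or.inl h1⟩
    · exact h e ⟨Or.inl heq, Or.inr h2⟩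
    · exact G.ne e heq

/-- The subgraph of `G` determined by a set `A` of edges of `G`, together with all
endpoints of those edges (so it has no isolated vertices). -/
def subgraph [DecidableEq V] (G : Multigraph V E) (A : Finset E) :
    Multigraph {v : V // ∃ e ∈ A, G.Incident v e} {e : E // e ∈ A} where
  fst e := ⟨G.fst e.1, e.1, e.2, Or.inl rfl⟩
  snd e := ⟨G.snd e.1, e.1, e.2, Or.inr rfl⟩
  ne e h := G.ne e.1 (congrArg Subtype.val h)

end Multigraph

/-- The vertex of the parallel composition of paths of lengths `k i` lying on the
`i`-th path at distance `j` from the common initial vertex:  `j = 0` gives the common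
initial vertex, `j = k i` the common terminal vertex, and `0 < j < k i` gives the
`j`-th interior vertex of the `i`-th path. -/
def pcVert {ι : Type} (k : ι → ℕ) (i : ι) (j : ℕ) :
    Bool ⊕ ((i : ι) × Fin (k i - 1)) :=
  if h0 : j = 0 then Sum.inl false
  else if h : j < k i then Sum.inr ⟨i, ⟨j - 1, by omega⟩⟩
  else Sum.inl true

/-- The parallel composition of the family of paths `P i` of lengths `k i` (`i : ι`):
the `i`-th path has `k i` edges indexed by `Fin (k i)`, its `j`-th edge joining the
vertices of the `i`-th path at distances `j` and `j + 1` from the common initial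
vertex.  All the initial vertices of the paths are identified to a single vertex and
all the terminal vertices are identified to a single vertex. -/
def parallelComp {ι : Type} (k : ι → ℕ) :
    Multigraph (Bool ⊕ ((i : ι) × Fin (k i - 1))) ((i : ι) × Fin (k i)) where
  fst e := pcVert k e.1 e.2.1
  snd e := pcVert k e.1 (e.2.1 + 1)
  ne := by
    rintro ⟨i, j⟩ h
    have hj := j.2
    simp only [pcVert] at h
    split_ifs at h <;> simp_all <;> omega

/-- The monomial `f i`: the product of the edges of the `i`-th path of the parallel
composition in odd positions (positions `1, 3, 5, ...`, i.e. indices `0, 2, 4, ...`). -/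
noncomputable def oddProd {ι : Type} (K : Type) [Field K] (k : ι → ℕ) (i : ι) :
    MvPolynomial ((i : ι) × Fin (k i)) K :=
  ∏ m : Fin ((k i + 1) / 2), X ⟨i, ⟨2 * m.1, by have := m.2; omega⟩⟩

/-- The monomial `g i`: the product of the edges of the `i`-th path of the parallel
composition in even positions (positions `2, 4, 6, ...`, i.e. indices `1, 3, 5, ...`). -/
noncomputable def evenProd {ι : Type} (K : Type) [Field K] (k : ι → ℕ) (i : ι) :
    MvPolynomial ((i : ι) × Fin (k i)) K :=
  ∏ m : Fin (k i / 2), X ⟨i, ⟨2 * m.1 + 1, by have := m.2; omega⟩⟩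


namespace PC
open Multigraph

variable {V E : Type}

/-- The boundary of an exponent vector modulo `N`. -/
def bd [Fintype E] [DecidableEq V] (G : Multigraph V E) (N : ℕ) (a : E → ℕ) : V → ZMod N :=
  fun v => ∑ e, (a e : ZMod N) * ((if G.fst e = v then 1 else 0) + (if G.snd e = v then 1 else 0))

/-- The set of boundaries of exponent vectors of degree `d`. -/
def SS [Fintype E] [DecidableEq V] (G : Multigraph V E) (N d : ℕ) : Set (V → ZMod N) :=
  {c | ∃ a : E → ℕ, ∑ e, a e = d ∧ bd G N a = c}

/-- The set of vertex labellings of total sum `2d`. -/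
def TT [Fintype V] (N d : ℕ) : Set (V → ZMod N) :=
  {c | ∑ v, c v = 2 * d}

lemma sum_bd [Fintype V] [Fintype E] [DecidableEq V] (G : Multigraph V E) (N : ℕ) (a : E → ℕ) :
    ∑ v, bd G N a v = 2 * ((∑ e, a e : ℕ) : ZMod N) := by
  unfold bd
  rw [Finset.sum_comm]
  simp only [← Finset.mul_sum, Finset.sum_add_distrib, Finset.sum_ite_eq, Finset.mem_univ, if_true]
  push_cast
  rw [Finset.mul_sum]
  refine Finset.sum_congr rfl fun e _ => by ring

/-- The character attached to a labelling. -/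
noncomputable def chi [Fintype V] (K : Type) [Field K] (N : ℕ) (c : V → ZMod N) :
    (V → Kˣ) →* K where
  toFun x := ∏ v, (x v : K) ^ (c v).val
  map_one' := by simp
  map_mul' x y := by simp [mul_pow, Finset.prod_mul_distrib]

lemma chi_injective [Fintype V] [DecidableEq V] (K : Type) [Field K] [Fintype K] (N : ℕ) [NeZero N]
    (hN : Fintype.card K = N + 1) :
    Function.Injective (chi (V := V) K N) := by
  classical
  intro c c' h
  funext v
  obtain ⟨g, hg⟩ := IsCyclic.exists_generator (α := Kˣ)
  have ho : orderOf g = N := by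
    rw [orderOf_eq_card_of_forall_mem_zpowers hg, Nat.card_eq_fintype_card, Fintype.card_units, hN]
    rfl
  have h1 := DFunLike.congr_fun h (Function.update (1 : V → Kˣ) v g)
  have key : ∀ c : V → ZMod N, chi K N c (Function.update (1 : V → Kˣ) v g) = ((g ^ (c v).val : Kˣ) : K) := by
    intro c
    show ∏ w, _ = _
    rw [Finset.prod_eq_single v]
    · simp
    · intro w _ hw
      simp [Function.update_of_ne hw]
    · simp
  rw [key, key, Units.val_inj, pow_eq_pow_iff_modEq, ho] at h1
  apply ZMod.val_injective
  rw [Nat.ModEq, Nat.mod_eq_of_lt (ZMod.val_lt _), Nat.mod_eq_of_lt (ZMod.val_lt _)] at h1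
  exact h1

lemma pow_val (K : Type) [Field K] [Fintype K] (N : ℕ) [NeZero N]
    (hN : Fintype.card K = N + 1) (u : Kˣ) (n : ℕ) :
    (u : K) ^ ((n : ZMod N)).val = (u : K) ^ n := by
  classical
  have h : u ^ N = 1 := by
    have := pow_card_eq_one (G := Kˣ) (x := u)
    rwa [Fintype.card_units, hN] at this
  rw [← Units.val_pow_eq_pow_val, ← Units.val_pow_eq_pow_val, Units.val_inj, ZMod.val_natCast]
  exact (pow_eq_pow_mod n h).symm

lemma chi_bd [Fintype V] [Fintype E] [DecidableEq V] (G : Multigraph V E) (K : Type) [Field K]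
    [Fintype K] (N : ℕ) [NeZero N] (hN : Fintype.card K = N + 1) (a : E → ℕ) (x : V → Kˣ) :
    chi K N (bd G N a) x = ∏ e, (G.point K x e) ^ (a e) := by
  have h1 : ∀ v, bd G N a v = ((∑ e, a e * ((if G.fst e = v then 1 else 0) +
      (if G.snd e = v then 1 else 0)) : ℕ) : ZMod N) := by
    intro v; simp [bd]
  show ∏ v, (x v : K) ^ (bd G N a v).val = _
  simp_rw [h1, pow_val K N hN, ← Finset.prod_pow_eq_pow_sum]
  rw [Finset.prod_comm]
  refine Finset.prod_congr rfl fun e _ => ?_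
  simp_rw [mul_comm (a e), pow_mul]
  rw [Finset.prod_pow]
  congr 1
  simp_rw [pow_add, Finset.prod_mul_distrib, pow_ite]
  simp [point]

/-- Evaluation of polynomials on the affine toric set. -/
noncomputable def ev (G : Multigraph V E) (K : Type) [Field K] :
    MvPolynomial E K →ₗ[K] ((V → Kˣ) → K) :=
  LinearMap.pi fun x => (MvPolynomial.aeval (G.point K x)).toLinearMap

lemma finrank_map_eq {K A B C : Type} [Field K] [AddCommGroup A] [Module K A] [AddCommGroup B]
    [Module K B] [AddCommGroup C] [Module K C] (f : A →ₗ[K] B) (g : A →ₗ[K] C) (W : Submodule K A)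
    (h : ∀ w ∈ W, f w = 0 ↔ g w = 0) :
    Module.finrank K (W.map f) = Module.finrank K (W.map g) := by
  have hk : LinearMap.ker (f.domRestrict W) = LinearMap.ker (g.domRestrict W) := by
    ext ⟨w, hw⟩
    simpa using h w hw
  rw [← LinearMap.range_domRestrict, ← LinearMap.range_domRestrict]
  rw [← (LinearMap.quotKerEquivRange (f.domRestrict W)).finrank_eq,
    ← (LinearMap.quotKerEquivRange (g.domRestrict W)).finrank_eq, hk]

lemma hilbert_eq [Fintype V] [Fintype E] [DecidableEq V] (G : Multigraph V E) (K : Type) [Field K]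
    [Fintype K] (N : ℕ) [NeZero N] (hN : Fintype.card K = N + 1) (d : ℕ) :
    G.hilbert K d = (SS G N d).ncard := by
  classical
  unfold hilbert
  rw [finrank_map_eq _ (ev G K)]
  swap
  · intro w hw
    have hw' := (mem_homogeneousSubmodule _ _).mp hw
    simp only [AlgHom.toLinearMap_apply, Ideal.Quotient.mkₐ_eq_mk, Ideal.Quotient.eq_zero_iff_mem]
    constructor
    · intro h
      funext x
      have := h x d
      rw [homogeneousComponent_of_mem hw, if_pos rfl] at this
      simpa [ev, MvPolynomial.aeval_eq_eval] using this
    · intro h x n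
      rw [homogeneousComponent_of_mem hw]
      split_ifs
      · have := congrFun h x
        simpa [ev, MvPolynomial.aeval_eq_eval] using this
      · simp
  have hspan : (homogeneousSubmodule E K d).map (ev G K) =
      Submodule.span K ((fun c => (chi K N c : (V → Kˣ) → K)) '' (SS G N d)) := by
    have hmon : ∀ s : E →₀ ℕ, ev G K (monomial s 1) = chi K N (bd G N s) := by
      intro s
      funext x
      rw [chi_bd G K N hN]
      simp [ev, MvPolynomial.aeval_eq_eval, eval_monomial, Finsupp.prod_fintype]
    apply le_antisymm
    · rintro _ ⟨f, hf, rfl⟩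
      have hf' := (mem_homogeneousSubmodule _ _).mp hf
      rw [f.as_sum, map_sum]
      refine Submodule.sum_mem _ fun s hs => ?_
      have : monomial s (coeff s f) = coeff s f • monomial s (1 : K) := by
        rw [smul_monomial, smul_eq_mul, mul_one]
      rw [this, map_smul, hmon]
      refine Submodule.smul_mem _ _ (Submodule.subset_span ⟨_, ⟨s, ?_, rfl⟩, rfl⟩)
      have := hf' (mem_support_iff.mp hs)
      rw [← this, Finsupp.weight_apply, Finsupp.sum_fintype] <;> simp
    · rw [Submodule.span_le]
      rintro _ ⟨_, ⟨a, ha, rfl⟩, rfl⟩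
      refine ⟨monomial (Finsupp.equivFunOnFinite.symm a) 1, ?_, ?_⟩
      · refine (mem_homogeneousSubmodule _ _).mpr (isHomogeneous_monomial _ ?_)
        rw [Finsupp.degree_eq_sum]
        simpa using ha
      · rw [hmon]; rfl
  rw [hspan]
  have hli : LinearIndependent K (fun c : V → ZMod N => (chi K N c : (V → Kˣ) → K)) :=
    (linearIndependent_monoidHom (V → Kˣ) K).comp _ (chi_injective K N hN)
  have hfin : Finite (V → ZMod N) := by
    infer_instance
  have := Fintype.ofFinite (SS G N d)
  rw [Set.image_eq_range]
  refine (finrank_span_eq_card (hli.comp (Subtype.val : SS G N d → _) Subtype.val_injective)).trans ?_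
  rw [← Nat.card_eq_fintype_card]; rfl

lemma ncard_fix [Fintype V] [DecidableEq V] (M : Type) [Finite M] (v0 : V)
    (f : ({v // v ≠ v0} → M) → M) :
    {c : V → M | c v0 = f (fun v => c v)}.ncard = Nat.card ({v // v ≠ v0} → M) := by
  have : {c : V → M | c v0 = f (fun v => c v)} =
      Set.range (fun y : {v // v ≠ v0} → M => fun v => if h : v = v0 then f y else y ⟨v, h⟩) := by
    ext c
    constructor
    · intro hc
      refine ⟨fun v => c v, ?_⟩
      funext v
      by_cases h : v = v0
      · subst h; simpa using hc.symm
      · simp [h]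
    · rintro ⟨y, rfl⟩
      simp only [Set.mem_ofPred_eq, dite_true]
      congr 1
      funext v
      simp [v.2]
  rw [this, ← Nat.card_coe_set_eq]
  refine Nat.card_range_of_injective ?_
  intro y y' h
  funext v
  have := congrFun h v
  simpa [v.2] using this

lemma ncard_TT [Fintype V] [DecidableEq V] (N d : ℕ) [NeZero N] (v0 : V) :
    (TT (V := V) N d).ncard = N ^ Nat.card {v // v ≠ v0} := by
  have : TT (V := V) N d = {c : V → ZMod N | c v0 = (fun y : {v // v ≠ v0} → ZMod N =>
      2 * (d : ZMod N) - ∑ v, y v) (fun v => c v)} := by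
    ext c
    simp only [TT, Set.mem_ofPred_eq]
    rw [Fintype.sum_eq_add_sum_subtype_ne c v0, eq_sub_iff_add_eq]
  rw [this]
  refine (ncard_fix (ZMod N) v0 (fun y => 2 * (d : ZMod N) - ∑ v, y v)).trans ?_
  rw [Nat.card_fun, Nat.card_zmod]

lemma ncard_toric [Fintype V] [DecidableEq V] (G : Multigraph V E) (K : Type) [Field K]
    [Fintype K] (N : ℕ) [NeZero N] (hN : Fintype.card K = N + 1) (v0 : V)
    (hG : ∀ (z : V → Kˣ) (l : Kˣ), z v0 = 1 → (∀ e, z (G.fst e) * z (G.snd e) = l) → z = 1) :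
    (G.toricSet K).ncard = N ^ Nat.card {v // v ≠ v0} := by
  classical
  have h1 : G.toricSet K = (fun x : V → Kˣ => MulAction.orbit Kˣ (G.point K x)) ''
      {x | x v0 = (fun _ : {v // v ≠ v0} → Kˣ => (1 : Kˣ)) (fun v => x v)} := by
    ext A
    constructor
    · rintro ⟨x, rfl⟩
      refine ⟨fun v => (x v0)⁻¹ * x v, by simp, ?_⟩
      refine MulAction.orbit_eq_iff.mpr ⟨(x v0)⁻¹ * (x v0)⁻¹, ?_⟩
      funext e
      simp only [point, Pi.smul_apply, Units.smul_def, smul_eq_mul]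
      push_cast
      ring
    · rintro ⟨x, _, rfl⟩
      exact ⟨x, rfl⟩
  rw [h1, Set.InjOn.ncard_image]
  · refine (ncard_fix Kˣ v0 (fun _ => (1 : Kˣ))).trans ?_
    rw [Nat.card_fun, Nat.card_eq_fintype_card (α := Kˣ), Fintype.card_units, hN]; rfl
  · intro x hx y hy hxy
    simp only [Set.mem_ofPred_eq] at hx hy
    obtain ⟨l, hl⟩ := MulAction.orbit_eq_iff.mp hxy
    have hz := hG (fun v => x v * (y v)⁻¹) l (by simp [hx, hy]) (by
      intro e
      have := congrFun hl e
      simp only [point, Pi.smul_apply, Units.smul_def, smul_eq_mul] at this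
      have h2 : l * (y (G.fst e) * y (G.snd e)) = x (G.fst e) * x (G.snd e) := by
        apply Units.ext
        push_cast
        exact this
      rw [mul_mul_mul_comm, ← h2, ← mul_inv, mul_inv_cancel_right])
    funext v
    have := congrFun hz v
    simpa using mul_inv_eq_one.mp this

lemma SS_subset_TT [Fintype V] [Fintype E] [DecidableEq V] (G : Multigraph V E) (N d : ℕ) :
    SS G N d ⊆ TT N d := by
  rintro _ ⟨a, ha, rfl⟩
  show ∑ v, _ = _
  rw [sum_bd, ha]

lemma reg_eq [Fintype V] [Fintype E] [DecidableEq V] (G : Multigraph V E) (K : Type) [Field K]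
    [Fintype K] (N : ℕ) [NeZero N] (hN : Fintype.card K = N + 1) (v0 : V)
    (hG : ∀ (z : V → Kˣ) (l : Kˣ), z v0 = 1 → (∀ e, z (G.fst e) * z (G.snd e) = l) → z = 1) :
    G.reg K = sInf {d : ℕ | TT N d ⊆ SS G N d} := by
  unfold reg
  congr 1
  ext d
  simp only [Set.mem_ofPred_eq]
  rw [hilbert_eq G K N hN, ncard_toric G K N hN v0 hG, ← ncard_TT N d v0]
  constructor
  · intro h
    exact (Set.eq_of_subset_of_ncard_le (SS_subset_TT G N d) h.ge (Set.toFinite _)).ge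
  · intro h
    rw [(SS_subset_TT G N d).antisymm h]

lemma full_succ [Fintype V] [Fintype E] [DecidableEq V] [DecidableEq E] (G : Multigraph V E)
    (N d : ℕ) (e0 : E) (h : TT N d ⊆ SS G N d) : TT N (d + 1) ⊆ SS G N (d + 1) := by
  intro c hc
  have hone : ∑ e, (Pi.single e0 1 : E → ℕ) e = 1 := by simp
  have hmem : c - bd G N (Pi.single e0 1) ∈ TT N d := by
    show ∑ v, _ = _
    simp only [Pi.sub_apply, Finset.sum_sub_distrib]
    rw [sum_bd, hone, show ∑ v, c v = _ from hc]
    push_cast; ring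
  obtain ⟨a, ha, hb⟩ := h hmem
  refine ⟨a + Pi.single e0 1, ?_, ?_⟩
  · simp only [Pi.add_apply, Finset.sum_add_distrib]
    rw [ha, hone]
  · rw [eq_sub_iff_add_eq] at hb
    rw [← hb]
    funext v
    simp only [bd, Pi.add_apply, Nat.cast_add, add_mul, Finset.sum_add_distrib]

lemma full_le [Fintype V] [Fintype E] [DecidableEq V] [DecidableEq E] (G : Multigraph V E)
    (N d d' : ℕ) (e0 : E) (hd : d ≤ d') (h : TT N d ⊆ SS G N d) : TT N d' ⊆ SS G N d' := by
  induction hd with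
  | refl => exact h
  | step _ ih => exact full_succ G N _ e0 ih

/-! ### Parallel composition -/

section pc
variable {ι : Type} (k : ι → ℕ)

lemma pcVert_zero (i : ι) : pcVert k i 0 = Sum.inl false := by simp [pcVert]

lemma pcVert_last (i : ι) (h : 0 < k i) : pcVert k i (k i) = Sum.inl true := by
  simp [pcVert, h.ne']

lemma pcVert_mid (i : ι) (j : Fin (k i - 1)) : pcVert k i (j + 1) = Sum.inr ⟨i, j⟩ := by
  have := j.2
  simp [pcVert, show (j : ℕ) + 1 < k i by omega]

lemma pcVert_eq_mid (i i' : ι) (j : Fin (k i - 1)) (j' : ℕ) :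
    pcVert k i' j' = Sum.inr ⟨i, j⟩ ↔ i' = i ∧ j' = j + 1 := by
  have := j.2
  constructor
  · intro h
    unfold pcVert at h
    split_ifs at h with h1 h2
    rw [Sum.inr.injEq, Sigma.mk.injEq] at h
    obtain ⟨rfl, h⟩ := h
    have := congrArg Fin.val (eq_of_heq h)
    simp only at this
    exact ⟨rfl, by omega⟩
  · rintro ⟨rfl, rfl⟩
    exact pcVert_mid k i' j

lemma pcVert_eq_start (i' : ι) (j' : ℕ) :
    pcVert k i' j' = Sum.inl false ↔ j' = 0 := by
  unfold pcVert
  split_ifs <;> simp_all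

lemma bd_mid [Fintype ι] [DecidableEq ι] (N : ℕ) (a : (i : ι) × Fin (k i) → ℕ) (i : ι)
    (j : Fin (k i - 1)) (h1 : (j : ℕ) < k i) (h2 : (j : ℕ) + 1 < k i) :
    bd (parallelComp k) N a (Sum.inr ⟨i, j⟩) = a ⟨i, ⟨j, h1⟩⟩ + a ⟨i, ⟨j + 1, h2⟩⟩ := by
  unfold bd
  simp only [parallelComp, pcVert_eq_mid]
  rw [Fintype.sum_sigma, Finset.sum_eq_single i]
  · simp only [true_and, mul_add, Finset.sum_add_distrib, mul_ite, mul_one, mul_zero]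
    rw [add_comm]
    congr 1
    · rw [Finset.sum_eq_single ⟨j, h1⟩]
      · simp
      · intro b _ hb
        rw [if_neg]
        intro h; apply hb; ext; simp; omega
      · simp
    · rw [Finset.sum_eq_single ⟨j + 1, h2⟩]
      · simp
      · intro b _ hb
        rw [if_neg]
        intro h; apply hb; ext; simp; omega
      · simp
  · intro b _ hb
    simp [hb]
  · simp

lemma bd_start [Fintype ι] [DecidableEq ι] (N : ℕ) (a : (i : ι) × Fin (k i) → ℕ)
    (hk : ∀ i, 0 < k i) :
    bd (parallelComp k) N a (Sum.inl false) = ∑ i, (a ⟨i, ⟨0, hk i⟩⟩ : ZMod N) := by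
  unfold bd
  simp only [parallelComp, pcVert_eq_start]
  rw [Fintype.sum_sigma]
  refine Finset.sum_congr rfl fun i _ => ?_
  rw [Finset.sum_eq_single ⟨0, hk i⟩]
  · simp
  · intro b _ hb
    have : (b : ℕ) ≠ 0 := fun h => hb (Fin.ext h)
    simp [this]
  · simp

lemma pc_rigid {M : Type} [CommGroup M] (hk : ∀ i, 0 < k i) (i0 i1 : ι) (h0 : Odd (k i0))
    (h1 : Even (k i1)) (z : Bool ⊕ ((i : ι) × Fin (k i - 1)) → M) (l : M)
    (hz : z (Sum.inl true) = 1)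
    (he : ∀ e, z ((parallelComp k).fst e) * z ((parallelComp k).snd e) = l) : z = 1 := by
  have step : ∀ i j, j < k i → z (pcVert k i (j + 1)) = l / z (pcVert k i j) := by
    intro i j hj
    have := he ⟨i, ⟨j, hj⟩⟩
    rw [eq_div_iff_mul_eq', ← this]; exact mul_comm _ _
  have all : ∀ i j, j ≤ k i → z (pcVert k i j) =
      if Even j then z (Sum.inl false) else l / z (Sum.inl false) := by
    intro i j
    induction j with
    | zero => intro _; simp [pcVert_zero]
    | succ j ih =>
      intro hj
      rw [step i j hj, ih (by omega)]
      by_cases hj : Even j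
      · simp [hj, Nat.even_add_one]
      · simp [hj, Nat.even_add_one]
  have a1 := all i1 _ le_rfl
  rw [pcVert_last k _ (hk _), if_pos h1, hz] at a1
  have a0 := all i0 _ le_rfl
  rw [pcVert_last k _ (hk _), if_neg (Nat.not_even_iff_odd.mpr h0), hz, ← a1, div_one] at a0
  rw [← a0, ← a1] at all
  funext v
  rcases v with (_ | _) | ⟨i, j⟩
  · exact a1.symm
  · exact hz
  · rw [← pcVert_mid, all _ _ (by have := j.2; omega)]; simp

end pc

lemma sum_pairs_even {M : Type} [AddCommMonoid M] (f : ℕ → M) (h : ℕ) :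
    ∑ j ∈ Finset.range (2 * h), f j = ∑ l ∈ Finset.range h, (f (2 * l) + f (2 * l + 1)) := by
  induction h with
  | zero => simp
  | succ h ih =>
    rw [show 2 * (h + 1) = 2 * h + 1 + 1 by ring, Finset.sum_range_succ, Finset.sum_range_succ,
      Finset.sum_range_succ, ih, add_assoc]

lemma sum_pairs_odd {M : Type} [AddCommMonoid M] (f : ℕ → M) (h : ℕ) :
    ∑ j ∈ Finset.range (2 * h + 1), f j =
      f 0 + ∑ l ∈ Finset.range h, (f (2 * l + 1) + f (2 * l + 1 + 1)) := by
  induction h with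
  | zero => simp
  | succ h ih =>
    rw [show 2 * (h + 1) + 1 = 2 * h + 1 + 1 + 1 by ring, Finset.sum_range_succ,
      Finset.sum_range_succ, ih, Finset.sum_range_succ, add_assoc, add_assoc]

lemma le_of_cast_neg_one {N n : ℕ} (h : (n : ZMod N) = -1) : N - 1 ≤ n := by
  have h1 : ((n + 1 : ℕ) : ZMod N) = 0 := by push_cast; rw [h]; ring
  have := Nat.le_of_dvd (by omega) ((ZMod.natCast_eq_zero_iff _ _).mp h1)
  omega

lemma lower (N : ℕ) [NeZero N] (m : ℕ) (k : Fin (m + 1) → ℕ) (hk : ∀ i, 0 < k i) (h : ℕ)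
    (h0 : k 0 = 2 * h + 1) (he : ∀ i, i ≠ 0 → Even (k i)) (d : ℕ)
    (hd : d < (2 * h + ∑ i : Fin m, k i.succ / 2) * (N - 1)) :
    ¬ TT N d ⊆ SS (parallelComp k) N d := by
  set Q := ∑ i : Fin m, k i.succ / 2 with hQ
  intro hfull
  obtain ⟨d', hd'⟩ : ∃ d', d' + 1 = (2 * h + Q) * (N - 1) := ⟨(2 * h + Q) * (N - 1) - 1, by omega⟩
  have hfull' := full_le (parallelComp k) N d d' ⟨0, ⟨0, hk 0⟩⟩ (by omega) hfull
  have hN1 : 1 ≤ N := Nat.one_le_iff_ne_zero.mpr (NeZero.ne N)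
  have hcN : ((N - 1 : ℕ) : ZMod N) = -1 := by
    rw [Nat.cast_sub hN1]; simp
  have hd'c : (d' : ZMod N) = - (2 * h + Q) - 1 := by
    have := congrArg (Nat.cast : ℕ → ZMod N) hd'
    push_cast [hcN] at this
    rw [eq_sub_iff_add_eq, this]; ring
  let b : ((i : Fin (m + 1)) × Fin (k i - 1)) → ZMod N := fun p => if p.1 = 0 then -2 else -1
  let c : Bool ⊕ ((i : Fin (m + 1)) × Fin (k i - 1)) → ZMod N :=
    Sum.elim (fun t => if t then 2 * d' - ∑ p, b p else 0) b
  have hc : c ∈ TT N d' := by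
    show ∑ v, c v = _
    simp [c]
  obtain ⟨a, ha, hb⟩ := hfull' hc
  let A : Fin (m + 1) → ℕ → ℕ := fun i j => if hj : j < k i then a ⟨i, ⟨j, hj⟩⟩ else 0
  have hinner : ∀ i j, j + 1 < k i → ((A i j + A i (j + 1) : ℕ) : ZMod N) = if i = 0 then -2 else -1 := by
    intro i j hj
    have h1 := congrFun hb (Sum.inr ⟨i, ⟨j, by omega⟩⟩)
    rw [bd_mid k N a i ⟨j, by omega⟩ (by simp; omega) (by simpa using hj)] at h1
    simp only [A, hj, dif_pos, show j < k i by omega]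
    push_cast
    exact h1
  have hsum : ∑ e, a e = ∑ i, ∑ j ∈ Finset.range (k i), A i j := by
    rw [Fintype.sum_sigma]
    refine Finset.sum_congr rfl fun i _ => ?_
    rw [← Fin.sum_univ_eq_sum_range]
    refine Finset.sum_congr rfl fun j _ => ?_
    simp [A]
  have heven : ∀ i, i ≠ 0 → (((∑ j ∈ Finset.range (k i), A i j : ℕ) : ZMod N) = - (k i / 2 : ℕ) ∧
      k i / 2 * (N - 1) ≤ ∑ j ∈ Finset.range (k i), A i j) := by
    intro i hi
    obtain ⟨t, ht⟩ := he i hi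
    have ht2 : k i / 2 = t := by omega
    rw [ht2, show k i = 2 * t by omega, sum_pairs_even]
    have hp : ∀ l ∈ Finset.range t, ((A i (2 * l) + A i (2 * l + 1) : ℕ) : ZMod N) = -1 := by
      intro l hl
      have := Finset.mem_range.mp hl
      rw [hinner i (2 * l) (by omega), if_neg hi]
    constructor
    · rw [Nat.cast_sum, Finset.sum_congr rfl hp]; simp
    · have := Finset.card_nsmul_le_sum (Finset.range t) (fun l => A i (2 * l) + A i (2 * l + 1))
        (N - 1) (fun l hl => le_of_cast_neg_one (hp l hl))
      simpa using this
  have hodd : ((∑ j ∈ Finset.range (k 0), A 0 j : ℕ) : ZMod N) = A 0 0 - 2 * h := by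
    rw [h0, sum_pairs_odd]
    have hp : ∀ l ∈ Finset.range h, ((A 0 (2 * l + 1) + A 0 (2 * l + 1 + 1) : ℕ) : ZMod N) = -2 := by
      intro l hl
      have := Finset.mem_range.mp hl
      rw [hinner 0 (2 * l + 1) (by omega), if_pos rfl]
    rw [Nat.cast_add, Nat.cast_sum, Finset.sum_congr rfl hp]; simp; ring
  rw [hsum, Fin.sum_univ_succ] at ha
  have hA0 : (A 0 0 : ZMod N) = -1 := by
    have h1 := congrArg (Nat.cast : ℕ → ZMod N) ha
    rw [Nat.cast_add, hodd, Nat.cast_sum, hd'c,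
      Finset.sum_congr rfl (fun i _ => (heven (Fin.succ i) (Fin.succ_ne_zero i)).1),
      Finset.sum_neg_distrib, ← Nat.cast_sum, ← hQ] at h1
    linear_combination h1
  have hAj : ∀ j, j < k 0 → (A 0 j : ZMod N) = -1 := by
    intro j
    induction j with
    | zero => intro _; exact hA0
    | succ j ih =>
      intro hj
      have h1 := hinner 0 j hj
      rw [if_pos rfl, Nat.cast_add, ih (by omega)] at h1
      linear_combination h1
  have hodd2 : k 0 * (N - 1) ≤ ∑ j ∈ Finset.range (k 0), A 0 j := by
    have := Finset.card_nsmul_le_sum (Finset.range (k 0)) (fun j => A 0 j)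
      (N - 1) (fun l hl => le_of_cast_neg_one (hAj l (Finset.mem_range.mp hl)))
    simpa using this
  have heven2 : Q * (N - 1) ≤ ∑ i : Fin m, ∑ j ∈ Finset.range (k i.succ), A i.succ j := by
    rw [hQ, Finset.sum_mul]
    exact Finset.sum_le_sum fun i _ => (heven (Fin.succ i) (Fin.succ_ne_zero i)).2
  have : (2 * h + Q) * (N - 1) + (N - 1) = k 0 * (N - 1) + Q * (N - 1) := by rw [h0]; ring
  omega

/-! ### Upper bound -/

lemma two_mul_sum_val (N : ℕ) [NeZero N] : 2 * ∑ x : ZMod N, x.val = N * (N - 1) := by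
  obtain ⟨n, rfl⟩ : ∃ n, N = n + 1 := ⟨N - 1, by have := NeZero.ne N; omega⟩
  have : ∑ x : ZMod (n + 1), x.val = ∑ i ∈ Finset.range (n + 1), i :=
    Fin.sum_univ_eq_sum_range (fun i => i) (n + 1)
  rw [this, mul_comm, Finset.sum_range_id_mul_two]

/-- Averaging over tuples with prescribed sum. -/
lemma averaging (N : ℕ) [NeZero N] (m : ℕ) (F : Fin (m + 2) → ZMod N → ℕ) (M : Fin (m + 2) → ℕ)
    (hF : ∀ i, ∑ x, F i x ≤ N * M i) (g : ZMod N) :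
    ∃ s : Fin (m + 2) → ZMod N, ∑ i, s i = g ∧ ∑ i, F i (s i) ≤ ∑ i, M i := by
  have best : ∀ (H : ZMod N → ℕ) (B : ℕ), ∑ x, H x ≤ N * B → ∃ x, H x ≤ B := by
    intro H B hB
    obtain ⟨x, _, hx⟩ := Finset.exists_le_of_sum_le (s := (Finset.univ : Finset (ZMod N)))
      (f := H) (g := fun _ => B) Finset.univ_nonempty (by simpa [ZMod.card] using hB)
    exact ⟨x, hx⟩
  induction m generalizing g with
  | zero =>
    obtain ⟨x, hx⟩ := best (fun x => F 0 x + F 1 (g - x)) (M 0 + M 1) (by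
      rw [Finset.sum_add_distrib, mul_add]
      refine add_le_add (hF 0) ?_
      exact (Equiv.sum_comp (Equiv.subLeft g) (F 1)).trans_le (hF 1))
    refine ⟨![x, g - x], ?_, ?_⟩
    · simp
    · simpa using hx
  | succ m ih =>
    obtain ⟨x, hx⟩ := best (F 0) (M 0) (hF 0)
    obtain ⟨s, hs1, hs2⟩ := ih (fun i => F i.succ) (fun i => M i.succ) (fun i => hF _) (g - x)
    refine ⟨Fin.cons x s, ?_, ?_⟩
    · rw [Fin.sum_univ_succ]; simp [hs1]
    · rw [Fin.sum_univ_succ, Fin.sum_univ_succ (f := M)]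
      simp only [Fin.cons_zero, Fin.cons_succ]
      exact add_le_add hx hs2

/-- The labelling of the edges of a path determined by the first label and the vertex labels. -/
def walk {N : ℕ} (c : ℕ → ZMod N) (s : ZMod N) : ℕ → ZMod N
  | 0 => s
  | j + 1 => c (j + 1) - walk c s j

lemma walk_eq {N : ℕ} (c : ℕ → ZMod N) (s : ZMod N) (j : ℕ) :
    walk c s j = if Even j then walk c 0 j + s else walk c 0 j - s := by
  induction j with
  | zero => simp [walk]
  | succ j ih =>
    simp only [walk]
    rw [ih]
    by_cases hj : Even j
    · simp [hj, Nat.even_add_one]; ring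
    · simp [hj, Nat.even_add_one]; ring

lemma sum_walk {N : ℕ} [NeZero N] (c : ℕ → ZMod N) (j : ℕ) :
    ∑ s : ZMod N, (walk c s j).val = ∑ x : ZMod N, x.val := by
  by_cases hj : Even j
  · rw [← Equiv.sum_comp (Equiv.addLeft (walk c 0 j)) (fun x : ZMod N => x.val)]
    refine Finset.sum_congr rfl fun s _ => ?_
    rw [walk_eq, if_pos hj]; rfl
  · rw [← Equiv.sum_comp (Equiv.subLeft (walk c 0 j)) (fun x : ZMod N => x.val)]
    refine Finset.sum_congr rfl fun s _ => ?_
    rw [walk_eq, if_neg hj]; rfl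

lemma walk_add {N : ℕ} (c : ℕ → ZMod N) (s : ZMod N) (j : ℕ) :
    walk c s j + walk c s (j + 1) = c (j + 1) := by
  simp [walk]

lemma upper (N : ℕ) [NeZero N] (m : ℕ) (k : Fin (m + 3) → ℕ) (hk : ∀ i, 0 < k i) (h : ℕ)
    (h0 : k 0 = 2 * h + 1) (he : ∀ i, i ≠ 0 → Even (k i)) (d : ℕ)
    (hd : d = (2 * h + ∑ i : Fin (m + 2), k i.succ / 2) * (N - 1)) :
    TT N d ⊆ SS (parallelComp k) N d := by
  set Q := ∑ i : Fin (m + 2), k i.succ / 2 with hQ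
  have hN1 : 1 ≤ N := Nat.one_le_iff_ne_zero.mpr (NeZero.ne N)
  intro c hc
  let C : Fin (m + 3) → ℕ → ZMod N := fun i j => c (pcVert k i j)
  -- the sum of the labels on the even paths does not depend on the choices
  have hev : ∀ i, i ≠ 0 → ∀ s, ∑ j ∈ Finset.range (k i), walk (C i) s j =
      ∑ l ∈ Finset.range (k i / 2), C i (2 * l + 1) := by
    intro i hi s
    obtain ⟨t, ht⟩ := he i hi
    rw [show k i / 2 = t by omega, show k i = 2 * t by omega, sum_pairs_even]
    exact Finset.sum_congr rfl fun l _ => walk_add _ _ _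
  have hod : ∀ s, ∑ j ∈ Finset.range (k 0), walk (C 0) s j =
      s + ∑ l ∈ Finset.range h, C 0 (2 * l + 1 + 1) := by
    intro s
    rw [h0, sum_pairs_odd]
    congr 1
    exact Finset.sum_congr rfl fun l _ => walk_add _ _ _
  obtain ⟨s0, hs0⟩ : ∃ s0 : ZMod N, s0 + ∑ l ∈ Finset.range h, C 0 (2 * l + 1 + 1) +
      ∑ i : Fin (m + 2), ∑ l ∈ Finset.range (k i.succ / 2), C i.succ (2 * l + 1) = d :=
    ⟨d - ∑ i : Fin (m + 2), ∑ l ∈ Finset.range (k i.succ / 2), C i.succ (2 * l + 1) -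
      ∑ l ∈ Finset.range h, C 0 (2 * l + 1 + 1), by ring⟩
  obtain ⟨s, hs1, hs2⟩ := averaging N m
    (fun i x => ∑ j ∈ Finset.range (k i.succ), (walk (C i.succ) x j).val)
    (fun i => k i.succ / 2 * (N - 1)) (by
      intro i
      obtain ⟨t, ht⟩ := he i.succ (Fin.succ_ne_zero i)
      have h2 := two_mul_sum_val N
      rw [Finset.sum_comm, Finset.sum_congr rfl (fun j _ => sum_walk _ j), Finset.sum_const,
        Finset.card_range, show k i.succ / 2 = t by omega, show k i.succ = t * 2 by omega,
        smul_eq_mul, mul_assoc, h2]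
      exact le_of_eq (by ring)) (c (Sum.inl false) - s0)
  let S : Fin (m + 3) → ZMod N := Fin.cons s0 s
  -- minimal exponents
  let a0 : ((i : Fin (m + 3)) × Fin (k i)) → ℕ := fun e => (walk (C e.1) (S e.1) e.2).val
  have hsum : ∑ e, a0 e = ∑ i, ∑ j ∈ Finset.range (k i), (walk (C i) (S i) j).val := by
    rw [Fintype.sum_sigma]
    refine Finset.sum_congr rfl fun i _ => ?_
    exact Fin.sum_univ_eq_sum_range (fun j => (walk (C i) (S i) j).val) (k i)
  have hcast : ((∑ e, a0 e : ℕ) : ZMod N) = d := by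
    rw [hsum, Nat.cast_sum, Fin.sum_univ_succ, ← hs0]
    congr 1
    · rw [Nat.cast_sum, ← hod]
      refine Finset.sum_congr rfl fun j _ => ?_
      simp [S]
    · refine Finset.sum_congr rfl fun i _ => ?_
      rw [Nat.cast_sum, ← hev _ (Fin.succ_ne_zero i) (S i.succ)]
      refine Finset.sum_congr rfl fun j _ => ?_
      simp
  have hle : ∑ e, a0 e ≤ d + (N - 1) := by
    rw [hsum, Fin.sum_univ_succ]
    have h1 : ∑ j ∈ Finset.range (k 0), (walk (C 0) (S 0) j).val ≤ (2 * h + 1) * (N - 1) := by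
      have := Finset.sum_le_card_nsmul (Finset.range (k 0))
        (fun j => (walk (C 0) (S 0) j).val) (N - 1) (fun j _ => Nat.le_sub_one_of_lt (ZMod.val_lt _))
      simpa [h0] using this
    have h2 : ∑ i : Fin (m + 2), ∑ j ∈ Finset.range (k i.succ), (walk (C i.succ) (S i.succ) j).val
        ≤ Q * (N - 1) := by
      rw [hQ, Finset.sum_mul]
      simpa [S] using hs2
    have : d + (N - 1) = (2 * h + 1) * (N - 1) + Q * (N - 1) := by rw [hd]; ring
    omega
  have hle' : ∑ e, a0 e ≤ d := by
    by_contra hlt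
    push Not at hlt
    have h1 : N ∣ (∑ e, a0 e) - d := by
      rw [← ZMod.natCast_eq_zero_iff, Nat.cast_sub hlt.le, hcast, sub_self]
    have := Nat.le_of_dvd (by omega) h1
    omega
  let e0 : (i : Fin (m + 3)) × Fin (k i) := ⟨0, ⟨0, hk 0⟩⟩
  let a : ((i : Fin (m + 3)) × Fin (k i)) → ℕ := a0 + Pi.single e0 (d - ∑ e, a0 e)
  have hacast : ∀ e, (a e : ZMod N) = walk (C e.1) (S e.1) e.2 := by
    intro e
    have h1 : ((d - ∑ e, a0 e : ℕ) : ZMod N) = 0 := by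
      rw [Nat.cast_sub hle', hcast, sub_self]
    have h2 : (((Pi.single e0 (d - ∑ e, a0 e) : _ → ℕ) e : ℕ) : ZMod N) = 0 := by
      by_cases hee : e = e0
      · subst hee; rw [Pi.single_eq_same, h1]
      · rw [Pi.single_eq_of_ne hee]; simp
    simp only [a, Pi.add_apply, Nat.cast_add, h2, add_zero]
    simp [a0]
  have ha : ∑ e, a e = d := by
    simp only [a, Pi.add_apply, Finset.sum_add_distrib, Finset.sum_pi_single', Finset.mem_univ,
      if_true]
    omega
  refine ⟨a, ha, ?_⟩
  have hmid : ∀ p, bd (parallelComp k) N a (Sum.inr p) = c (Sum.inr p) := by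
    rintro ⟨i, j⟩
    have hj := j.2
    rw [bd_mid k N a i j (by omega) (by omega), hacast, hacast]
    simp only
    rw [walk_add]
    simp only [C, pcVert_mid]
  have hstart : bd (parallelComp k) N a (Sum.inl false) = c (Sum.inl false) := by
    rw [bd_start k N a hk]
    simp only [hacast, walk]
    rw [Fin.sum_univ_succ]
    simp only [S, Fin.cons_zero, Fin.cons_succ]
    rw [hs1]; ring
  have htot : ∑ v, bd (parallelComp k) N a v = ∑ v, c v := by
    rw [sum_bd, ha]; exact hc.symm
  rw [Fintype.sum_sum_type, Fintype.sum_sum_type, Fintype.sum_bool, Fintype.sum_bool,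
    Finset.sum_congr rfl (fun p _ => hmid p), hstart] at htot
  funext v
  rcases v with (_ | _) | p
  · exact hstart
  · simpa using htot
  · exact hmid p

end PC

/-- **Table 2, case `l = 1, r > 2`.**  Let `G` be the parallel composition of `r > 2`
paths, the first of odd length and all the others of even length.  Then
`reg G = (k 0 + k 1/2 + ... + k (r-1)/2 - 1)(q-2)`, where `q = |K|`. -/
theorem reg_parallelComp_one_odd_rest_even
    (K : Type) [Field K] [Fintype K] (m : ℕ) (hm : 2 ≤ m)
    (k : Fin (m + 1) → ℕ) (hk : ∀ i, 0 < k i)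
    (h0 : Odd (k 0)) (he : ∀ i, i ≠ 0 → Even (k i)) :
    (parallelComp k).reg K =
      (k 0 + (∑ i ∈ Finset.univ.erase 0, k i / 2) - 1) * (Fintype.card K - 2) := by

  obtain ⟨N, hN⟩ : ∃ N, Fintype.card K = N + 1 :=
    ⟨Fintype.card K - 1, by have := Fintype.card_pos (α := K); omega⟩
  have hN0 : NeZero N := ⟨by have := Fintype.one_lt_card (α := K); omega⟩
  obtain ⟨m, rfl⟩ : ∃ n, m = n + 2 := ⟨m - 2, by omega⟩
  obtain ⟨h, hh⟩ := h0
  have hsum : ∑ i ∈ Finset.univ.erase 0, k i / 2 = ∑ i : Fin (m + 2), k i.succ / 2 := by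
    have h1 := Finset.add_sum_erase Finset.univ (fun i => k i / 2) (Finset.mem_univ 0)
    rw [Fin.sum_univ_succ] at h1
    exact Nat.add_left_cancel h1
  have h10 : (1 : Fin (m + 2 + 1)) ≠ 0 := by simp
  rw [PC.reg_eq (parallelComp k) K N hN (Sum.inl true)
    (PC.pc_rigid k hk 0 1 ⟨h, hh⟩ (he 1 h10))]
  rw [hsum, hh, hN, show 2 * h + 1 + (∑ i : Fin (m + 2), k i.succ / 2) - 1 =
    2 * h + ∑ i : Fin (m + 2), k i.succ / 2 by omega, show N + 1 - 2 = N - 1 by omega]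
  refine le_antisymm (Nat.sInf_le (PC.upper N m k hk h hh he _ rfl)) ?_
  refine le_csInf ⟨_, PC.upper N m k hk h hh he _ rfl⟩ fun d hd => ?_
  by_contra hlt
  exact PC.lower N (m + 2) k hk h hh he d (not_le.mp hlt) hd
end

section
/- Let G be the parallel composition of r ≥ 3 paths of lengths k_1,...,k_r, where k_1,...,k_{r−1} are odd (with r−1 ≥ 2) and k_r is even, and let X be the projective toric subset parameterized by G. Then reg(G) = (⌊k_1/2⌋ + ... + ⌊k_{r−1}/2⌋ + k_r)(q−2). -/
open MvPolynomial

set_option linter.unusedSectionVars false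

namespace Multigraph

section General

variable {V E : Type} [Finite V] [Fintype E] (K : Type) [Field K] [Fintype K]

/-- The character of the torus `(Kˣ)^V` attached to an integer exponent vector. -/
def chi (G : Multigraph V E) (a : E → ℤ) : (V → Kˣ) →* Kˣ where
  toFun x := ∏ e, (x (G.fst e) * x (G.snd e)) ^ a e
  map_one' := by simp
  map_mul' x y := by
    rw [← Finset.prod_mul_distrib]
    refine Finset.prod_congr rfl fun e _ => ?_
    rw [← mul_zpow]
    congr 1
    simp only [Pi.mul_apply]
    exact mul_mul_mul_comm _ _ _ _

lemma chi_apply (G : Multigraph V E) (a : E → ℤ) (x : V → Kˣ) :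
    G.chi K a x = ∏ e, (x (G.fst e) * x (G.snd e)) ^ a e := rfl

lemma chi_add (G : Multigraph V E) (a b : E → ℤ) :
    G.chi K (a + b) = G.chi K a * G.chi K b := by
  ext x : 1
  simp [chi_apply, zpow_add, Finset.prod_mul_distrib]

lemma chi_neg (G : Multigraph V E) (a : E → ℤ) :
    G.chi K (-a) = (G.chi K a)⁻¹ := by
  ext x : 1
  simp [chi_apply]

/-- Characters of monomials of degree `d`. -/
def charS (G : Multigraph V E) (d : ℕ) : Set ((V → Kˣ) →* Kˣ) :=
  {χ | ∃ b : E → ℕ, ∑ e, b e = d ∧ χ = G.chi K (fun e => (b e : ℤ))}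

/-- Characters of Laurent monomials of degree `d`. -/
def charL (G : Multigraph V E) (d : ℤ) : Set ((V → Kˣ) →* Kˣ) :=
  {χ | ∃ b : E → ℤ, ∑ e, b e = d ∧ χ = G.chi K b}

lemma finite_chars : Finite ((V → Kˣ) →* Kˣ) :=
  Finite.of_injective (fun f => (f : (V → Kˣ) → Kˣ)) DFunLike.coe_injective

lemma charS_subset (G : Multigraph V E) (d : ℕ) : G.charS K d ⊆ G.charL K d := by
  rintro χ ⟨b, hb, rfl⟩
  exact ⟨_, by exact_mod_cast hb, rfl⟩

/-- The subgroup of degree zero characters. -/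
def charSub (G : Multigraph V E) : Subgroup ((V → Kˣ) →* Kˣ) where
  carrier := G.charL K 0
  one_mem' := ⟨0, by simp, by ext x : 1; simp [chi_apply]⟩
  mul_mem' := by
    rintro _ _ ⟨a, ha, rfl⟩ ⟨b, hb, rfl⟩
    exact ⟨a + b, by simp [Finset.sum_add_distrib, ha, hb], (chi_add K G a b).symm⟩
  inv_mem' := by
    rintro _ ⟨a, ha, rfl⟩
    exact ⟨-a, by simp [ha], (chi_neg K G a).symm⟩

lemma ncard_charL [DecidableEq E] (G : Multigraph V E) (e₀ : E) (d : ℤ) :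
    (G.charL K d).ncard = (G.charL K 0).ncard := by
  have : G.charL K d = (fun χ => G.chi K (Pi.single e₀ d) * χ) '' G.charL K 0 := by
    ext χ
    constructor
    · rintro ⟨a, ha, rfl⟩
      refine ⟨G.chi K (a - Pi.single e₀ d), ⟨_, by simp [ha], rfl⟩, ?_⟩
      simp only
      rw [← chi_add]; congr 1; abel
    · rintro ⟨_, ⟨a, ha, rfl⟩, rfl⟩
      exact ⟨Pi.single e₀ d + a, by simp [Finset.sum_add_distrib, ha], (chi_add K G _ _).symm⟩
  rw [this, Set.ncard_image_of_injective _ (mul_right_injective _)]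

/-- Evaluation of polynomials at all points of the torus. -/
noncomputable def evMap (G : Multigraph V E) : MvPolynomial E K →ₗ[K] ((V → Kˣ) → K) :=
  LinearMap.pi fun x => (aeval (R := K) (G.point K x)).toLinearMap

lemma evMap_apply (G : Multigraph V E) (f : MvPolynomial E K) (x : V → Kˣ) :
    G.evMap K f x = eval (G.point K x) f := by
  simp [evMap, aeval_eq_eval]

lemma finrank_map_eq_of_ker {R M N P : Type} [Field R] [AddCommGroup M] [Module R M]
    [AddCommGroup N] [Module R N] [AddCommGroup P] [Module R P] (p : Submodule R M)
    (f : M →ₗ[R] N) (g : M →ₗ[R] P) (h : ∀ v ∈ p, f v = 0 ↔ g v = 0) :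
    Module.finrank R (p.map f) = Module.finrank R (p.map g) := by
  have hk : LinearMap.ker (f.domRestrict p) = LinearMap.ker (g.domRestrict p) := by
    ext ⟨v, hv⟩
    simpa using h v hv
  rw [← LinearMap.range_domRestrict, ← LinearMap.range_domRestrict]
  exact (((f.domRestrict p).quotKerEquivRange.symm.trans
    (Submodule.quotEquivOfEq _ _ hk)).trans (g.domRestrict p).quotKerEquivRange).finrank_eq

lemma linInd_chars (T : Type) [CommGroup T] :
    LinearIndependent K (fun χ : T →* Kˣ => (fun x => (χ x : K) : T → K)) := by
  have h := linearIndependent_monoidHom T K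
  have h2 := h.comp (fun χ : T →* Kˣ => (Units.coeHom K).comp χ) (by
    intro a b hab
    ext x
    exact DFunLike.congr_fun hab x)
  exact h2

lemma evMap_image (G : Multigraph V E) (d : ℕ) :
    (homogeneousSubmodule E K d).map (G.evMap K) =
      Submodule.span K ((fun χ : (V → Kˣ) →* Kˣ => (fun x => (χ x : K))) '' G.charS K d) := by
  have key : ∀ b : E →₀ ℕ, G.evMap K (monomial b 1) =
      fun x => ((G.chi K (fun e => (b e : ℤ)) x : Kˣ) : K) := by
    intro b
    ext x
    rw [evMap_apply, eval_monomial, chi_apply, one_mul, Finsupp.prod_fintype _ _ (by simp)]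
    simp [point]
  rw [homogeneousSubmodule_eq_finsupp_supported, AddMonoidAlgebra.supported_eq_span_single,
    Submodule.map_span]
  congr 1
  ext f
  constructor
  · rintro ⟨_, ⟨b, hb, rfl⟩, rfl⟩
    refine ⟨_, ⟨b, ?_, rfl⟩, (key b).symm⟩
    simpa [Finsupp.degree_eq_sum] using hb
  · rintro ⟨_, ⟨b, hb, rfl⟩, rfl⟩
    refine ⟨_, ⟨Finsupp.equivFunOnFinite.symm b, ?_, rfl⟩, ?_⟩
    · simpa [Finsupp.degree_eq_sum] using hb
    · exact key (Finsupp.equivFunOnFinite.symm b)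

lemma hilbert_eq (G : Multigraph V E) (d : ℕ) : G.hilbert K d = (G.charS K d).ncard := by
  have := finite_chars (V := V) K
  have h1 : G.hilbert K d =
      Module.finrank K ((homogeneousSubmodule E K d).map (G.evMap K)) := by
    unfold hilbert
    apply finrank_map_eq_of_ker
    intro f hf
    have hI : f ∈ G.vanishingIdeal K ↔ G.evMap K f = 0 := by
      rw [funext_iff]
      constructor
      · intro h x
        have := h x d
        rw [homogeneousComponent_of_mem hf, if_pos rfl] at this
        simpa [evMap_apply] using this
      · intro h x d'
        rw [homogeneousComponent_of_mem hf]
        split_ifs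
        · simpa [evMap_apply] using h x
        · simp
    rw [← hI]
    simp [Ideal.Quotient.eq_zero_iff_mem]
  rw [h1, evMap_image]
  have hli := linInd_chars K (V → Kˣ)
  have hli2 := hli.comp (fun χ : G.charS K d => (χ : (V → Kˣ) →* Kˣ)) Subtype.val_injective
  have : Fintype (G.charS K d) := Fintype.ofFinite _
  have h3 := finrank_span_eq_card hli2
  rw [← Nat.card_coe_set_eq, Nat.card_eq_fintype_card, ← h3]
  rw [Set.range_comp, Subtype.range_coe]

lemma prod_zpow_sum {H ι : Type} [CommGroup H] (s : Finset ι) (c : H) (f : ι → ℤ) :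
    ∏ i ∈ s, c ^ f i = c ^ ∑ i ∈ s, f i := by
  classical
  induction s using Finset.induction_on with
  | empty => simp
  | insert a s ha ih => rw [Finset.prod_insert ha, Finset.sum_insert ha, zpow_add, ih]

lemma orbit_eq_iff [DecidableEq E] (G : Multigraph V E) (e₀ : E) (x y : V → Kˣ) :
    MulAction.orbit Kˣ (G.point K x) = MulAction.orbit Kˣ (G.point K y) ↔
      ∀ χ ∈ G.charL K 0, χ x = χ y := by
  rw [MulAction.orbit_eq_iff, MulAction.mem_orbit_iff]
  constructor
  · rintro ⟨c, hc⟩ _ ⟨a, ha, rfl⟩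
    rw [chi_apply, chi_apply]
    have : ∀ e, x (G.fst e) * x (G.snd e) = c * (y (G.fst e) * y (G.snd e)) := by
      intro e
      have := congrFun hc e
      ext
      simpa [point, Units.smul_def] using this.symm
    simp_rw [this, mul_zpow]
    rw [Finset.prod_mul_distrib, prod_zpow_sum, ha]
    simp
  · intro h
    refine ⟨(x (G.fst e₀) * x (G.snd e₀)) / (y (G.fst e₀) * y (G.snd e₀)), ?_⟩
    ext e
    have := h _ ⟨Pi.single e 1 - Pi.single e₀ 1, by simp, rfl⟩
    have hs : ∀ (z : V → Kˣ) (e : E), G.chi K (Pi.single e 1) z = z (G.fst e) * z (G.snd e) := by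
      intro z e
      rw [chi_apply, Finset.prod_eq_single e]
      · simp
      · intro b _ hb
        simp [Pi.single_eq_of_ne hb]
      · simp
    rw [sub_eq_add_neg, chi_add, chi_neg] at this
    simp only [MonoidHom.mul_apply, MonoidHom.inv_apply, hs] at this
    have h2 : (x (G.fst e₀) * x (G.snd e₀)) / (y (G.fst e₀) * y (G.snd e₀)) *
       (y (G.fst e) * y (G.snd e)) = x (G.fst e) * x (G.snd e) := by
      rw [← div_eq_mul_inv, ← div_eq_mul_inv, div_eq_div_iff_mul_eq_mul] at this
      rw [div_mul_eq_mul_div, div_eq_iff_eq_mul, this, mul_comm]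
    have h3 := congrArg (Units.val) h2
    simpa [point, Units.smul_def] using h3

lemma card_hom_le (H : Type) [CommGroup H] [Finite H] : Nat.card (H →* Kˣ) ≤ Nat.card H := by
  have : Fintype H := Fintype.ofFinite H
  have : Finite (H →* Kˣ) :=
    Finite.of_injective (fun f => (f : H → Kˣ)) DFunLike.coe_injective
  have : Fintype (H →* Kˣ) := Fintype.ofFinite _
  have h := (linInd_chars K H).fintype_card_le_finrank
  simpa [Nat.card_eq_fintype_card] using h

lemma ncard_toricSet [DecidableEq E] (G : Multigraph V E) (e₀ : E) :
    (G.toricSet K).ncard = (G.charL K 0).ncard := by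
  have := finite_chars (V := V) K
  have hfin : (G.toricSet K).Finite := Set.finite_range _
  have : Finite (G.toricSet K) := hfin
  have : Fintype (G.toricSet K) := Fintype.ofFinite _
  have hch : ∀ o : G.toricSet K, ∃ x : V → Kˣ, MulAction.orbit Kˣ (G.point K x) = o.1 :=
    fun o => o.2
  choose r hr using hch
  apply le_antisymm
  · have h1 : Nat.card (G.toricSet K) ≤ Nat.card (G.charSub K →* Kˣ) := by
      have : Finite (G.charSub K →* Kˣ) :=
        Finite.of_injective (fun f => (f : _ → Kˣ)) DFunLike.coe_injective
      refine Nat.card_le_card_of_injective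
        (fun o => (⟨⟨fun χ => χ.1 (r o), rfl⟩, fun _ _ => rfl⟩ : G.charSub K →* Kˣ)) ?_
      intro o o' h
      apply Subtype.ext
      rw [← hr o, ← hr o', orbit_eq_iff K G e₀]
      intro χ hχ
      exact DFunLike.congr_fun h ⟨χ, hχ⟩
    exact h1.trans (card_hom_le K _)
  · have : Fintype (G.charL K 0) := Fintype.ofFinite _
    have hli : LinearIndependent K
        (fun (χ : G.charL K 0) (o : G.toricSet K) => (χ.1 (r o) : K)) := by
      let P : (G.toricSet K → K) →ₗ[K] ((V → Kˣ) → K) :=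
        LinearMap.funLeft K K (fun x => ⟨MulAction.orbit Kˣ (G.point K x), x, rfl⟩)
      apply LinearIndependent.of_comp P
      have h2 := (linInd_chars K (V → Kˣ)).comp
        (fun χ : G.charL K 0 => (χ : (V → Kˣ) →* Kˣ)) Subtype.val_injective
      convert h2 using 1
      ext χ x
      simp only [Function.comp, P, LinearMap.funLeft_apply]
      congr 1
      exact (orbit_eq_iff K G e₀ _ _).1 (hr _) _ χ.2
    have h := hli.fintype_card_le_finrank
    rw [← Nat.card_coe_set_eq, ← Nat.card_coe_set_eq]
    simpa [Nat.card_eq_fintype_card] using h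

lemma hilbert_eq_iff [DecidableEq E] (G : Multigraph V E) (e₀ : E) (d : ℕ) :
    G.hilbert K d = (G.toricSet K).ncard ↔ ∀ a : E → ℤ, ∑ e, a e = d →
      ∃ b : E → ℕ, ∑ e, b e = d ∧ G.chi K a = G.chi K (fun e => (b e : ℤ)) := by
  have := finite_chars (V := V) K
  rw [hilbert_eq, ncard_toricSet K G e₀, ← ncard_charL K G e₀ d]
  constructor
  · intro h a ha
    have := Set.eq_of_subset_of_ncard_le (charS_subset K G d) h.ge (Set.toFinite _)
    have h2 : G.chi K a ∈ G.charL K d := ⟨a, ha, rfl⟩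
    rw [← this] at h2
    exact h2
  · intro h
    congr 1
    refine (charS_subset K G d).antisymm ?_
    rintro _ ⟨a, ha, rfl⟩
    exact h a ha

end General

end Multigraph

section Numeric

variable {n : ℕ} [NeZero n]

lemma two_mul_sum_val : 2 * ∑ y : ZMod n, y.val = n * (n - 1) := by
  have h1 : ∑ y : ZMod n, y.val = ∑ i ∈ Finset.range n, i := by
    rw [← Fin.sum_univ_eq_sum_range (fun i => i)]
    refine Fintype.sum_equiv (ZMod.finEquiv n).symm.toEquiv _ _ ?_
    intro y
    obtain ⟨z, rfl⟩ := (ZMod.finEquiv n).surjective y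
    simp only [RingEquiv.toEquiv_eq_coe, EquivLike.coe_coe, RingEquiv.symm_apply_apply]
    cases n with
    | zero => exact absurd rfl (NeZero.ne 0)
    | succ n => rfl
  rw [h1, mul_comm, Finset.sum_range_id_mul_two]

lemma two_mul_sum_val_shift (a : ZMod n) (j : ℕ) :
    2 * ∑ y : ZMod n, (a + (-1) ^ j * y).val = n * (n - 1) := by
  rw [← two_mul_sum_val (n := n)]
  congr 1
  rcases Nat.even_or_odd j with h | h
  · rw [h.neg_one_pow]
    exact Fintype.sum_equiv (Equiv.addLeft a) _ _ (by intro y; simp)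
  · rw [h.neg_one_pow]
    exact Fintype.sum_equiv (Equiv.subLeft a) _ _ (by intro y; simp [sub_eq_add_neg])

/-- Total degree on a path after shifting alternately by `y`. -/
def pathDeg {k : ℕ} (a : Fin k → ZMod n) (y : ZMod n) : ℕ :=
  ∑ j : Fin k, (a j + (-1) ^ (j : ℕ) * y).val

lemma two_mul_sum_pathDeg {k : ℕ} (a : Fin k → ZMod n) :
    2 * ∑ y, pathDeg a y = k * (n * (n - 1)) := by
  unfold pathDeg
  rw [Finset.sum_comm, Finset.mul_sum]
  simp [two_mul_sum_val_shift]

lemma sum_alt (k : ℕ) (y : ZMod n) :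
    ∑ j : Fin k, (-1) ^ (j : ℕ) * y = if Even k then 0 else y := by
  rw [← Finset.sum_mul, Fin.sum_univ_eq_sum_range (fun j => (-1 : ZMod n) ^ j),
    neg_one_geom_sum]
  split_ifs <;> simp

lemma cast_pathDeg {k : ℕ} (a : Fin k → ZMod n) (y : ZMod n) :
    (pathDeg a y : ZMod n) = ∑ j, a j + if Even k then 0 else y := by
  simp [pathDeg, Finset.sum_add_distrib, sum_alt]

lemma exists_pathDeg_le {k : ℕ} (hk : Odd k) (a : Fin k → ZMod n) :
    ∃ y, pathDeg a y ≤ (k / 2) * (n - 1) := by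
  by_contra! h
  obtain ⟨h', rfl⟩ := hk
  have hh : (2 * h' + 1) / 2 = h' := by omega
  rw [hh] at h
  have hn : 0 < n := Nat.pos_of_ne_zero (NeZero.ne n)
  have h1 : ∀ y, h' * (n - 1) + 1 +
      ((∑ j, a j - ((h' * (n - 1) + 1 : ℕ) : ZMod n)) + (-1) ^ 0 * y).val ≤ pathDeg a y := by
    intro y
    obtain ⟨t, ht⟩ := Nat.exists_eq_add_of_le (Nat.succ_le_of_lt (h y))
    have h2 : ((∑ j, a j - ((h' * (n - 1) + 1 : ℕ) : ZMod n)) + (-1) ^ 0 * y) = (t : ZMod n) := by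
      have h3 := cast_pathDeg a y
      rw [if_neg (by simp), ht] at h3
      push_cast at h3 ⊢
      linear_combination -h3
    rw [h2, ZMod.val_natCast, ht]
    have := Nat.mod_le t n
    omega
  have h2 := Finset.sum_le_sum (s := Finset.univ) fun y _ => h1 y
  rw [Finset.sum_add_distrib] at h2
  have h3 := two_mul_sum_val_shift (∑ j, a j - ((h' * (n - 1) + 1 : ℕ) : ZMod n)) 0
  have h4 := two_mul_sum_pathDeg a
  simp only [Finset.sum_const, Finset.card_univ, ZMod.card, smul_eq_mul] at h2
  nlinarith

lemma exists_pair_le {k l : ℕ} (hk : Odd k) (hl : Odd l) (a : Fin k → ZMod n)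
    (b : Fin l → ZMod n) (s : ZMod n) :
    ∃ y, pathDeg a y + pathDeg b (s - y) ≤ (k / 2 + l / 2 + 1) * (n - 1) := by
  by_contra! h
  obtain ⟨k, rfl⟩ := hk
  obtain ⟨l, rfl⟩ := hl
  have e1 : (2 * k + 1) / 2 = k := by omega
  have e2 : (2 * l + 1) / 2 = l := by omega
  rw [e1, e2] at h
  have hn : 0 < n := Nat.pos_of_ne_zero (NeZero.ne n)
  have h2 := Finset.sum_le_sum (s := Finset.univ) fun y _ => Nat.succ_le_of_lt (h y)
  have h3 : ∑ y, pathDeg b (s - y) = ∑ y, pathDeg b y :=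
    Fintype.sum_equiv (Equiv.subLeft s) _ _ (by intro y; simp)
  rw [Finset.sum_add_distrib, h3] at h2
  have h4 := two_mul_sum_pathDeg a
  have h5 := two_mul_sum_pathDeg b
  simp only [Finset.sum_const, Finset.card_univ, ZMod.card, smul_eq_mul, Nat.succ_eq_add_one] at h2
  nlinarith

lemma exists_shift (p : ℕ) (k : Fin (p + 2) → ℕ) (hk : ∀ i, Odd (k i))
    (a : ∀ i, Fin (k i) → ZMod n) :
    ∃ y : Fin (p + 2) → ZMod n, ∑ i, y i = 0 ∧
      ∑ i, pathDeg (a i) (y i) ≤ (∑ i, k i / 2 + 1) * (n - 1) := by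
  choose z hz using fun i => exists_pathDeg_le (hk i) (a i)
  obtain ⟨w, hw⟩ := exists_pair_le (hk 0) (hk (Fin.succ 0)) (a 0) (a (Fin.succ 0))
    (-∑ i : Fin p, z i.succ.succ)
  refine ⟨Fin.cons w (Fin.cons (-∑ i : Fin p, z i.succ.succ - w) fun i => z i.succ.succ), ?_, ?_⟩
  · rw [Fin.sum_univ_succ, Fin.sum_univ_succ]
    simp only [Fin.cons_zero, Fin.cons_succ]
    ring
  · rw [Fin.sum_univ_succ, Fin.sum_univ_succ, Fin.sum_univ_succ (f := fun i => k i / 2),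
      Fin.sum_univ_succ (f := fun i : Fin (p + 1) => k i.succ / 2)]
    simp only [Fin.cons_zero, Fin.cons_succ]
    have h1 := Finset.sum_le_sum (s := Finset.univ) fun (i : Fin p) _ => hz i.succ.succ
    rw [← Finset.sum_mul] at h1
    nlinarith

lemma sum_pairs (g : ℕ → ℤ) (h : ℕ) : ∑ j ∈ Finset.range (2 * h + 1), g j =
    ∑ l ∈ Finset.range h, (g (2 * l) + g (2 * l + 1)) + g (2 * h) := by
  induction h with
  | zero => simp
  | succ h ih =>
    rw [show 2 * (h + 1) + 1 = 2 * h + 1 + 1 + 1 by ring, Finset.sum_range_succ,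
      Finset.sum_range_succ, ih, Finset.sum_range_succ]
    ring_nf

end Numeric

section PC

variable (K : Type) [Field K] [Fintype K]

lemma zpow_congr (z : Kˣ) (a b : ℤ)
    (h : (a : ZMod (Fintype.card K - 1)) = b) : z ^ a = z ^ b := by
  rw [ZMod.intCast_eq_intCast_iff_dvd_sub] at h
  obtain ⟨t, ht⟩ := h
  have : b = a + ((Fintype.card K - 1 : ℕ) : ℤ) * t := by linarith
  have h1 : z ^ (Fintype.card K - 1) = 1 := by
    classical
    rw [← Fintype.card_units]; exact pow_card_eq_one
  rw [this, zpow_add, zpow_mul, zpow_natCast, h1]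
  simp

lemma telescope {H : Type} [CommGroup H] (z : ℕ → H) (k : ℕ) :
    ∏ j ∈ Finset.range k, (z j * z (j + 1)) ^ ((-1 : ℤ) ^ j) =
      z 0 * z k ^ (-(-1 : ℤ) ^ k) := by
  induction k with
  | zero => simp
  | succ k ih =>
    rw [Finset.prod_range_succ, ih, mul_zpow, pow_succ, zpow_neg]
    simp [mul_assoc]

lemma pcVert_zero {ι : Type} (k : ι → ℕ) (i : ι) : pcVert k i 0 = Sum.inl false := by
  simp [pcVert]

lemma pcVert_last {ι : Type} (k : ι → ℕ) (i : ι) (h : 0 < k i) :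
    pcVert k i (k i) = Sum.inl true := by
  simp [pcVert, h.ne']

lemma pcVert_succ_ne {ι : Type} (k : ι → ℕ) (i : ι) (j : ℕ) :
    pcVert k i (j + 1) ≠ Sum.inl false := by
  unfold pcVert
  split_ifs <;> simp_all

lemma pcVert_eq_iff {ι : Type} (k : ι → ℕ) (i i' : ι) (j l : ℕ) (hj : j + 1 < k i) :
    pcVert k i' l = pcVert k i (j + 1) ↔ i' = i ∧ l = j + 1 := by
  constructor
  · intro h
    unfold pcVert at h
    rw [dif_neg (Nat.succ_ne_zero j), dif_pos hj] at h
    split_ifs at h with h1 h2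
    · simp only [Sum.inr.injEq, Sigma.mk.injEq] at h
      obtain ⟨rfl, h⟩ := h
      simp at h
      exact ⟨rfl, by omega⟩
  · rintro ⟨rfl, rfl⟩; rfl

lemma chi_pc_eq_one (m : ℕ) (k : Fin (m + 1) → ℕ) (hk : ∀ i, 0 < k i)
    (ho : ∀ i, i ≠ Fin.last m → Odd (k i))
    (c : ((i : Fin (m + 1)) × Fin (k i)) → ℤ)
    (y : Fin (m + 1) → ZMod (Fintype.card K - 1)) (hy0 : y (Fin.last m) = 0)
    (hy : ∑ i : Fin m, y i.castSucc = 0)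
    (hc : ∀ i (j : Fin (k i)), (c ⟨i, j⟩ : ZMod (Fintype.card K - 1)) = (-1) ^ (j : ℕ) * y i)
    [NeZero (Fintype.card K - 1)] :
    (parallelComp k).chi K c = 1 := by
  refine MonoidHom.ext fun x => ?_
  rw [Multigraph.chi_apply, Fintype.prod_sigma]
  have hpath : ∀ i, ∏ j : Fin (k i), (x ((parallelComp k).fst ⟨i, j⟩) *
      x ((parallelComp k).snd ⟨i, j⟩)) ^ c ⟨i, j⟩ =
      (x (Sum.inl false) * x (Sum.inl true) ^ (-(-1 : ℤ) ^ k i)) ^ ((y i).val : ℤ) := by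
    intro i
    have h1 := telescope (fun j => x (pcVert k i j)) (k i)
    rw [pcVert_zero, pcVert_last k i (hk i)] at h1
    rw [← h1, ← Finset.prod_zpow, ← Fin.prod_univ_eq_prod_range
      (fun j => ((x (pcVert k i j) * x (pcVert k i (j + 1))) ^ ((-1 : ℤ) ^ j)) ^ ((y i).val : ℤ))]
    refine Finset.prod_congr rfl fun j _ => ?_
    rw [← zpow_mul]
    apply zpow_congr
    rw [hc]
    push_cast
    simp
  simp_rw [hpath]
  rw [Fin.prod_univ_castSucc, hy0]
  have h2 : ∀ i : Fin m, (x (Sum.inl false) * x (Sum.inl true) ^ (-(-1 : ℤ) ^ k i.castSucc))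
      ^ ((y i.castSucc).val : ℤ) =
      (x (Sum.inl false) * x (Sum.inl true)) ^ ((y i.castSucc).val : ℤ) := by
    intro i
    rw [(ho i.castSucc (Fin.castSucc_lt_last i).ne).neg_one_pow]
    simp
  simp_rw [h2]
  rw [Multigraph.prod_zpow_sum, zpow_congr K _ _ 0]
  · simp
  · push_cast
    simp [hy]

lemma weights_of_chi_eq_one {V E : Type} [Finite V] [Fintype E] (G : Multigraph V E)
    (c : E → ℤ) (hc : G.chi K c = 1) (w : V → ℤ) :
    ∑ e, (c e : ZMod (Fintype.card K - 1)) * (w (G.fst e) + w (G.snd e)) = 0 := by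
  classical
  obtain ⟨g, hg⟩ := IsCyclic.exists_generator (α := Kˣ)
  have h1 := DFunLike.congr_fun hc (fun v => g ^ w v)
  rw [Multigraph.chi_apply] at h1
  simp_rw [← zpow_add, ← zpow_mul] at h1
  rw [Multigraph.prod_zpow_sum, MonoidHom.one_apply, ← orderOf_dvd_iff_zpow_eq_one,
    orderOf_eq_card_of_forall_mem_zpowers hg, Nat.card_eq_fintype_card,
    Fintype.card_units, ← ZMod.intCast_zmod_eq_zero_iff_dvd] at h1
  rw [← h1]
  push_cast
  exact Finset.sum_congr rfl fun e _ => mul_comm _ _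

lemma interior_eq {m : ℕ} (k : Fin (m + 1) → ℕ)
    (c : ((i : Fin (m + 1)) × Fin (k i)) → ℤ) (hc : (parallelComp k).chi K c = 1)
    (i : Fin (m + 1)) (j : ℕ) (hj : j + 1 < k i) :
    (c ⟨i, ⟨j + 1, hj⟩⟩ : ZMod (Fintype.card K - 1)) = - c ⟨i, ⟨j, by omega⟩⟩ := by
  have h := weights_of_chi_eq_one K (parallelComp k) c hc
    (fun v => if v = pcVert k i (j + 1) then 1 else 0)
  have h2 : ∀ e : (i : Fin (m + 1)) × Fin (k i),
      (c e : ZMod (Fintype.card K - 1)) *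
        (((if (parallelComp k).fst e = pcVert k i (j + 1) then 1 else 0 : ℤ) :
            ZMod (Fintype.card K - 1)) +
          ((if (parallelComp k).snd e = pcVert k i (j + 1) then 1 else 0 : ℤ) :
            ZMod (Fintype.card K - 1))) =
      (if e = ⟨i, ⟨j + 1, hj⟩⟩ then (c e : ZMod (Fintype.card K - 1)) else 0) +
      (if e = ⟨i, ⟨j, by omega⟩⟩ then (c e : ZMod (Fintype.card K - 1)) else 0) := by
    rintro ⟨i', l⟩
    have e1 : (parallelComp k).fst ⟨i', l⟩ = pcVert k i (j + 1) ↔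
        (⟨i', l⟩ : (i : Fin (m + 1)) × Fin (k i)) = ⟨i, ⟨j + 1, hj⟩⟩ := by
      change pcVert k i' l.1 = _ ↔ _
      rw [pcVert_eq_iff k i i' j l hj]
      constructor
      · rintro ⟨rfl, hl⟩
        congr 1; ext; exact hl
      · intro h; cases h; exact ⟨rfl, rfl⟩
    have e2 : (parallelComp k).snd ⟨i', l⟩ = pcVert k i (j + 1) ↔
        (⟨i', l⟩ : (i : Fin (m + 1)) × Fin (k i)) = ⟨i, ⟨j, by omega⟩⟩ := by
      change pcVert k i' (l.1 + 1) = _ ↔ _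
      rw [pcVert_eq_iff k i i' j _ hj]
      constructor
      · rintro ⟨rfl, hl⟩
        congr 1; ext; simpa using hl
      · intro h; cases h; exact ⟨rfl, rfl⟩
    simp only [e1, e2]
    split_ifs <;> simp [mul_add]
  simp_rw [h2] at h
  rw [Finset.sum_add_distrib] at h
  simp only [Finset.sum_ite_eq', Finset.mem_univ, if_true] at h
  linear_combination h

lemma initial_eq {m : ℕ} (k : Fin (m + 1) → ℕ) (hk : ∀ i, 0 < k i)
    (c : ((i : Fin (m + 1)) × Fin (k i)) → ℤ) (hc : (parallelComp k).chi K c = 1) :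
    ∑ i, (c ⟨i, ⟨0, hk i⟩⟩ : ZMod (Fintype.card K - 1)) = 0 := by
  have h := weights_of_chi_eq_one K (parallelComp k) c hc
    (fun v => if v = Sum.inl false then 1 else 0)
  rw [← h, Fintype.sum_sigma]
  refine Finset.sum_congr rfl fun i _ => ?_
  rw [Finset.sum_eq_single (⟨0, hk i⟩ : Fin (k i))]
  · have h1 : (parallelComp k).fst ⟨i, ⟨0, hk i⟩⟩ = Sum.inl false := pcVert_zero k i
    have h2 : (parallelComp k).snd ⟨i, ⟨0, hk i⟩⟩ ≠ Sum.inl false := pcVert_succ_ne k i 0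
    simp [h1, h2]
  · intro l _ hl
    have hl' : l.1 ≠ 0 := fun h => hl (Fin.ext h)
    obtain ⟨t, ht⟩ := Nat.exists_eq_succ_of_ne_zero hl'
    have h1 : (parallelComp k).fst ⟨i, l⟩ ≠ Sum.inl false := by
      change pcVert k i l.1 ≠ _
      rw [ht]; exact pcVert_succ_ne k i t
    have h2 : (parallelComp k).snd ⟨i, l⟩ ≠ Sum.inl false := pcVert_succ_ne k i l.1
    simp [h1, h2]
  · simp

lemma alternate_eq {m : ℕ} (k : Fin (m + 1) → ℕ) (hk : ∀ i, 0 < k i)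
    (c : ((i : Fin (m + 1)) × Fin (k i)) → ℤ) (hc : (parallelComp k).chi K c = 1)
    (i : Fin (m + 1)) (j : ℕ) (hj : j < k i) :
    (c ⟨i, ⟨j, hj⟩⟩ : ZMod (Fintype.card K - 1)) = (-1) ^ j * c ⟨i, ⟨0, hk i⟩⟩ := by
  induction j with
  | zero => simp
  | succ j ih => rw [interior_eq K k c hc i j hj, ih, pow_succ]; ring

lemma shift_sums {m : ℕ} (k : Fin (m + 1) → ℕ) (hk : ∀ i, 0 < k i)
    (ho : ∀ i, i ≠ Fin.last m → Odd (k i)) (he : Even (k (Fin.last m)))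
    (c : ((i : Fin (m + 1)) × Fin (k i)) → ℤ) (hc : (parallelComp k).chi K c = 1)
    (hs : ∑ e, (c e : ZMod (Fintype.card K - 1)) = 0) [NeZero (Fintype.card K - 1)] :
    ∑ i : Fin m, (c ⟨i.castSucc, ⟨0, hk _⟩⟩ : ZMod (Fintype.card K - 1)) = 0 ∧
    (c ⟨Fin.last m, ⟨0, hk _⟩⟩ : ZMod (Fintype.card K - 1)) = 0 := by
  have h1 := initial_eq K k hk c hc
  rw [Fin.sum_univ_castSucc] at h1
  rw [Fintype.sum_sigma] at hs
  have h2 : ∀ i, ∑ j, (c ⟨i, j⟩ : ZMod (Fintype.card K - 1)) =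
      if Even (k i) then 0 else (c ⟨i, ⟨0, hk i⟩⟩ : ZMod (Fintype.card K - 1)) := by
    intro i
    rw [← sum_alt]
    exact Finset.sum_congr rfl fun j _ => alternate_eq K k hk c hc i j.1 j.2
  simp_rw [h2] at hs
  rw [Fin.sum_univ_castSucc, if_pos he, add_zero] at hs
  have h3 : ∀ i : Fin m, ¬ Even (k i.castSucc) := fun i =>
    Nat.not_even_iff_odd.2 (ho _ (Fin.castSucc_lt_last i).ne)
  simp only [h3, if_false] at hs
  exact ⟨hs, by rwa [hs, zero_add] at h1⟩

end PC

section Main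

variable (K : Type) [Field K] [Fintype K] [NeZero (Fintype.card K - 1)]

lemma upper_core (p : ℕ) (k : Fin (p + 2 + 1) → ℕ) (hk : ∀ i, 0 < k i)
    (ho : ∀ i, i ≠ Fin.last (p + 2) → Odd (k i)) (he : Even (k (Fin.last (p + 2)))) (d : ℕ)
    (hd : d = ((∑ i : Fin (p + 2), k i.castSucc / 2) + k (Fin.last (p + 2))) *
      (Fintype.card K - 1 - 1))
    (a : ((i : Fin (p + 2 + 1)) × Fin (k i)) → ℤ) (ha : ∑ e, a e = d) :
    ∃ b : ((i : Fin (p + 2 + 1)) × Fin (k i)) → ℕ, ∑ e, b e = d ∧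
      (parallelComp k).chi K a = (parallelComp k).chi K (fun e => (b e : ℤ)) := by
  have hod : ∀ i : Fin (p + 2), Odd (k i.castSucc) := fun i =>
    ho _ (Fin.castSucc_lt_last i).ne
  obtain ⟨y', hy', hle⟩ := exists_shift (n := Fintype.card K - 1) p (fun i => k i.castSucc) hod
    (fun i j => (a ⟨i.castSucc, j⟩ : ZMod (Fintype.card K - 1)))
  have hn : 0 < Fintype.card K - 1 := Nat.pos_of_ne_zero (NeZero.ne _)
  generalize hnn : Fintype.card K - 1 = n at *
  let y : Fin (p + 2 + 1) → ZMod n := Fin.snoc (α := fun _ => ZMod n) y' 0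
  have hyc : ∀ i : Fin (p + 2), y i.castSucc = y' i := fun i => by simp [y]
  have hyl : y (Fin.last (p + 2)) = 0 := by simp [y]
  let b : ((i : Fin (p + 2 + 1)) × Fin (k i)) → ℕ :=
    fun e => ((a e : ZMod n) + (-1) ^ (e.2 : ℕ) * y e.1).val
  have hb : ∀ e, (b e : ZMod n) = (a e : ZMod n) + (-1) ^ (e.2 : ℕ) * y e.1 := by
    intro e; simp [b]
  have hsum : ∑ e, b e = ∑ i, pathDeg (fun j => (a ⟨i, j⟩ : ZMod n)) (y i) := by
    rw [Fintype.sum_sigma]; rfl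
  have hbd : ∑ e, b e ≤ d + (n - 1) := by
    rw [hsum, Fin.sum_univ_castSucc]
    simp only [hyc]
    have h1 : pathDeg (fun j => (a ⟨Fin.last (p + 2), j⟩ : ZMod n)) (y (Fin.last (p + 2))) ≤
        k (Fin.last (p + 2)) * (n - 1) := by
      unfold pathDeg
      refine (Finset.sum_le_card_nsmul _ _ (n - 1) ?_).trans (by simp)
      intro j _
      exact Nat.le_sub_one_of_lt (ZMod.val_lt _)
    rw [hd]
    nlinarith
  have hcast : ((∑ e, b e : ℕ) : ZMod n) = (d : ZMod n) := by
    push_cast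
    simp only [hb]
    rw [Finset.sum_add_distrib, ← Int.cast_sum, ha, Fintype.sum_sigma]
    simp only [sum_alt]
    rw [Fin.sum_univ_castSucc, if_pos he, add_zero]
    have h3 : ∀ i : Fin (p + 2), ¬ Even (k i.castSucc) := fun i => Nat.not_even_iff_odd.2 (hod i)
    simp only [h3, if_false, hyc]
    rw [hy']
    simp
  have hdvd : (n : ℤ) ∣ (d : ℤ) - (∑ e, b e : ℕ) := by
    rw [← ZMod.intCast_eq_intCast_iff_dvd_sub]
    simpa using hcast
  obtain ⟨t, ht⟩ := hdvd
  have ht0 : 0 ≤ t := by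
    by_contra hneg
    have h1 : t + 1 ≤ 0 := by omega
    have h2 : (n : ℤ) * t ≤ -n := by nlinarith
    omega
  obtain ⟨s, rfl⟩ := Int.eq_ofNat_of_zero_le ht0
  let e₀ : (i : Fin (p + 2 + 1)) × Fin (k i) := ⟨0, ⟨0, hk 0⟩⟩
  refine ⟨b + Pi.single e₀ (n * s), ?_, ?_⟩
  · simp only [Pi.add_apply, Finset.sum_add_distrib, Finset.sum_pi_single', Finset.mem_univ, if_true]
    zify
    push_cast at ht
    linarith
  · rw [← mul_inv_eq_one, ← Multigraph.chi_neg, ← Multigraph.chi_add]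
    subst hnn
    refine chi_pc_eq_one K (p + 2) k hk ho _ (-y) (by simp [hyl]) (by simp [hyc, hy']) ?_
    intro i j
    have hz : ((Pi.single e₀ ((Fintype.card K - 1) * s) : _ → ℕ) ⟨i, j⟩ :
        ZMod (Fintype.card K - 1)) = 0 := by
      by_cases h : (⟨i, j⟩ : (i : Fin (p + 2 + 1)) × Fin (k i)) = e₀
      · rw [h, Pi.single_eq_same, Nat.cast_mul, ZMod.natCast_self, zero_mul]
      · rw [Pi.single_eq_of_ne h]; simp
    simp only [Pi.add_apply, Pi.neg_apply]
    push_cast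
    rw [hz, hb]
    ring

lemma ge_of_cast {n : ℕ} (x : ℤ) (hx : 0 ≤ x) (h : (x : ZMod n) = -1) : (n : ℤ) - 1 ≤ x := by
  have h1 : (n : ℤ) ∣ x + 1 := by
    rw [← ZMod.intCast_zmod_eq_zero_iff_dvd]; push_cast; rw [h]; ring
  have := Int.le_of_dvd (by omega) h1
  omega

/-- The extremal exponent vector. -/
def worst (n : ℕ) (p : ℕ) (k : Fin (p + 2 + 1) → ℕ) (i : Fin (p + 2 + 1)) (j : ℕ) : ℤ :=
  if i = Fin.last (p + 2) then (n : ℤ) - 1 else if j % 2 = 1 then (n : ℤ) - 1 else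
    if i = 0 ∧ j + 1 = k i then (n : ℤ) - 1 else 0

lemma sum_worst_top (n p : ℕ) (k : Fin (p + 2 + 1) → ℕ)
    (ho : ∀ i, i ≠ Fin.last (p + 2) → Odd (k i)) :
    ∑ i : Fin (p + 2), worst n p k i.castSucc (2 * (k i.castSucc / 2)) = (n : ℤ) - 1 := by
  rw [Finset.sum_eq_single 0]
  · have h1 := ho (Fin.castSucc 0) (Fin.castSucc_lt_last 0).ne
    obtain ⟨h, hh⟩ := h1
    unfold worst
    rw [if_neg (Fin.castSucc_lt_last _).ne, if_neg (by omega), if_pos]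
    exact ⟨rfl, by omega⟩
  · intro i _ hi
    unfold worst
    rw [if_neg (Fin.castSucc_lt_last _).ne, if_neg (by omega), if_neg]
    rintro ⟨h, -⟩
    exact hi (Fin.castSucc_injective _ h)
  · simp

lemma worst_pair (n p : ℕ) (k : Fin (p + 2 + 1) → ℕ) (i : Fin (p + 2))
    (l : ℕ) (hl : l < k i.castSucc / 2) (hod : Odd (k i.castSucc)) :
    worst n p k i.castSucc (2 * l) + worst n p k i.castSucc (2 * l + 1) = (n : ℤ) - 1 := by
  obtain ⟨h, hh⟩ := hod
  unfold worst
  rw [if_neg (Fin.castSucc_lt_last _).ne, if_neg (by omega), if_neg (by omega),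
    if_neg (Fin.castSucc_lt_last _).ne, if_pos (by omega)]
  ring

lemma sum_worst (n p : ℕ) (k : Fin (p + 2 + 1) → ℕ)
    (ho : ∀ i, i ≠ Fin.last (p + 2) → Odd (k i)) :
    ∑ e : (i : Fin (p + 2 + 1)) × Fin (k i), worst n p k e.1 e.2 =
      ((∑ i : Fin (p + 2), k i.castSucc / 2 : ℕ) + (k (Fin.last (p + 2)) : ℤ) + 1) *
        ((n : ℤ) - 1) := by
  rw [Fintype.sum_sigma, Fin.sum_univ_castSucc]
  have h1 : ∀ i : Fin (p + 2), ∑ j : Fin (k i.castSucc), worst n p k i.castSucc j =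
      (k i.castSucc / 2 : ℕ) * ((n : ℤ) - 1) +
        worst n p k i.castSucc (2 * (k i.castSucc / 2)) := by
    intro i
    have hod := ho i.castSucc (Fin.castSucc_lt_last i).ne
    have h2 := sum_pairs (worst n p k i.castSucc) (k i.castSucc / 2)
    rw [Nat.two_mul_div_two_add_one_of_odd hod] at h2
    rw [Fin.sum_univ_eq_sum_range (worst n p k i.castSucc), h2]
    congr 1
    rw [Finset.sum_congr rfl fun l hl => worst_pair n p k i l (Finset.mem_range.1 hl) hod]
    rw [Finset.sum_const, Finset.card_range, nsmul_eq_mul]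
  have h2 : ∑ j : Fin (k (Fin.last (p + 2))), worst n p k (Fin.last (p + 2)) j =
      k (Fin.last (p + 2)) * ((n : ℤ) - 1) := by
    simp only [worst, if_true, Finset.sum_const, Finset.card_univ, Fintype.card_fin, nsmul_eq_mul]
  simp only [h1]
  rw [h2, Finset.sum_add_distrib, sum_worst_top n p k ho, ← Finset.sum_mul]
  push_cast
  ring

lemma lower_core (p : ℕ) (k : Fin (p + 2 + 1) → ℕ) (hk : ∀ i, 0 < k i)
    (ho : ∀ i, i ≠ Fin.last (p + 2) → Odd (k i)) (he : Even (k (Fin.last (p + 2))))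
    (b : ((i : Fin (p + 2 + 1)) × Fin (k i)) → ℤ) (hb0 : ∀ e, 0 ≤ b e)
    (hc : (parallelComp k).chi K (fun e => b e - worst (Fintype.card K - 1) p k e.1 e.2) = 1)
    (hs : ∑ e, ((b e - worst (Fintype.card K - 1) p k e.1 e.2 : ℤ) :
      ZMod (Fintype.card K - 1)) = 0) :
    ((∑ i : Fin (p + 2), k i.castSucc / 2 : ℕ) + (k (Fin.last (p + 2)) : ℤ) + 1) *
        (((Fintype.card K - 1 : ℕ) : ℤ) - 1) ≤ ∑ e, b e := by
  obtain ⟨s1, s2⟩ := shift_sums K k hk ho he _ hc hs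
  have alt := alternate_eq K k hk _ hc
  generalize Fintype.card K - 1 = n at *
  let B : Fin (p + 2 + 1) → ℕ → ℤ := fun i j => if h : j < k i then b ⟨i, ⟨j, h⟩⟩ else 0
  have hB0 : ∀ i j, 0 ≤ B i j := by
    intro i j
    simp only [B]
    split_ifs
    · exact hb0 _
    · exact le_rfl
  have hBb : ∀ i (j : Fin (k i)), b ⟨i, j⟩ = B i j := by
    intro i j; simp [B]
  have alt' : ∀ i j, j < k i → (B i j : ZMod n) = worst n p k i j +
      (-1) ^ j * (b ⟨i, ⟨0, hk i⟩⟩ - worst n p k i 0 : ℤ) := by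
    intro i j hj
    have := alt i j hj
    simp only at this
    rw [← this, hBb i ⟨j, hj⟩]
    push_cast
    ring
  rw [Fintype.sum_sigma, Fin.sum_univ_castSucc (fun i => ∑ j : Fin (k i), b ⟨i, j⟩)]
  have h1 : ∀ i : Fin (p + 2), (k i.castSucc / 2 : ℕ) * ((n : ℤ) - 1) +
        B i.castSucc (2 * (k i.castSucc / 2)) ≤ ∑ j : Fin (k i.castSucc), b ⟨i.castSucc, j⟩ := by
    intro i
    have hod := ho i.castSucc (Fin.castSucc_lt_last i).ne
    have h2 := sum_pairs (B i.castSucc) (k i.castSucc / 2)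
    rw [Nat.two_mul_div_two_add_one_of_odd hod] at h2
    simp only [hBb]
    rw [Fin.sum_univ_eq_sum_range (B i.castSucc), h2]
    gcongr
    have hcs : ((k i.castSucc / 2 : ℕ) : ℤ) * ((n : ℤ) - 1) =
        ∑ l ∈ Finset.range (k i.castSucc / 2), ((n : ℤ) - 1) := by
      rw [Finset.sum_const, Finset.card_range, nsmul_eq_mul]
    rw [hcs]
    refine Finset.sum_le_sum ?_
    intro l hl
    rw [Finset.mem_range] at hl
    refine ge_of_cast _ (add_nonneg (hB0 i.castSucc (2 * l)) (hB0 i.castSucc (2 * l + 1))) ?_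
    have hw := congrArg (Int.cast : ℤ → ZMod n) (worst_pair n p k i l hl hod)
    push_cast at hw ⊢
    rw [alt' _ _ (by omega), alt' _ _ (by omega), pow_succ]
    rw [ZMod.natCast_self, zero_sub] at hw
    linear_combination hw
  have h2 : (k (Fin.last (p + 2)) : ℤ) * ((n : ℤ) - 1) ≤
      ∑ j : Fin (k (Fin.last (p + 2))), b ⟨Fin.last (p + 2), j⟩ := by
    rw [← nsmul_eq_mul]
    refine (le_of_eq ?_).trans (Finset.card_nsmul_le_sum Finset.univ _ ((n : ℤ) - 1) ?_)
    · simp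
    · intro j _
      apply ge_of_cast _ (hb0 _)
      rw [hBb, alt' _ _ j.2]
      simp only at s2
      rw [s2]
      simp [worst]
  have h3 : (n : ℤ) - 1 ≤ ∑ i : Fin (p + 2), B i.castSucc (2 * (k i.castSucc / 2)) := by
    apply ge_of_cast _ (Finset.sum_nonneg fun i _ => hB0 _ _)
    have hw := congrArg (Int.cast : ℤ → ZMod n) (sum_worst_top n p k ho)
    push_cast at hw ⊢
    rw [ZMod.natCast_self, zero_sub] at hw
    rw [← hw, ← sub_eq_zero, ← Finset.sum_sub_distrib, ← s1]
    refine Finset.sum_congr rfl fun i _ => ?_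
    have hod := ho i.castSucc (Fin.castSucc_lt_last i).ne
    have := Nat.two_mul_div_two_add_one_of_odd hod
    rw [alt' _ _ (by omega)]
    simp
  have h4 := Finset.sum_le_sum (s := Finset.univ) fun i _ => h1 i
  rw [Finset.sum_add_distrib, ← Finset.sum_mul] at h4
  push_cast at h4 ⊢
  linarith

lemma chi_eq_one_of_cast {V E : Type} [Finite V] [Fintype E] (G : Multigraph V E)
    (c : E → ℤ) (hc : ∀ e, (c e : ZMod (Fintype.card K - 1)) = 0) : G.chi K c = 1 := by
  refine MonoidHom.ext fun x => ?_
  rw [Multigraph.chi_apply]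
  refine Finset.prod_eq_one fun e _ => ?_
  rw [zpow_congr K _ _ 0 (by simpa using hc e), zpow_zero]

lemma chi_add_eq_one {V E : Type} [Finite V] [Fintype E] (G : Multigraph V E)
    (c c' : E → ℤ) (hc : G.chi K c = 1) (hc' : G.chi K c' = 1) : G.chi K (c + c') = 1 := by
  refine MonoidHom.ext fun x => ?_
  have h1 := DFunLike.congr_fun hc x
  have h2 := DFunLike.congr_fun hc' x
  rw [Multigraph.chi_add, MonoidHom.mul_apply, h1, h2]
  simp

end Main

/-- **Table 2, case `l = r - 1 > 1`.**  Let `G` be the parallel composition of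
`r ≥ 3` paths, all but the last of odd length and the last of even length.  Then
`reg G = (⌊k 0/2⌋ + ... + ⌊k (r-2)/2⌋ + k (r-1))(q-2)`, where `q = |K|`. -/
theorem reg_parallelComp_rest_odd_one_even
    (K : Type) [Field K] [Fintype K] (m : ℕ) (hm : 2 ≤ m)
    (k : Fin (m + 1) → ℕ) (hk : ∀ i, 0 < k i)
    (ho : ∀ i, i ≠ Fin.last m → Odd (k i)) (he : Even (k (Fin.last m))) :
    (parallelComp k).reg K =
      ((∑ i ∈ Finset.univ.erase (Fin.last m), k i / 2) + k (Fin.last m)) *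
        (Fintype.card K - 2) := by
  obtain ⟨p, rfl⟩ : ∃ p, m = p + 2 := ⟨m - 2, by omega⟩
  have hq : 1 < Fintype.card K := Fintype.one_lt_card
  have : NeZero (Fintype.card K - 1) := ⟨by omega⟩
  have hsum : ∑ i ∈ Finset.univ.erase (Fin.last (p + 2)), k i / 2 =
      ∑ i : Fin (p + 2), k i.castSucc / 2 := by
    have h1 := Finset.add_sum_erase Finset.univ (fun i => k i / 2)
      (Finset.mem_univ (Fin.last (p + 2)))
    rw [Fin.sum_univ_castSucc] at h1
    omega
  rw [hsum, show Fintype.card K - 2 = Fintype.card K - 1 - 1 by omega]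
  let e₀ : (i : Fin (p + 2 + 1)) × Fin (k i) := ⟨0, ⟨0, hk 0⟩⟩
  unfold Multigraph.reg
  simp only [Multigraph.hilbert_eq_iff K (parallelComp k) e₀]
  have hmem := upper_core K p k hk ho he _ rfl
  refine le_antisymm (Nat.sInf_le hmem) (le_csInf ⟨_, hmem⟩ ?_)
  intro d hd
  by_contra! hlt
  simp only [Set.mem_ofPred_eq] at hd
  have hw := sum_worst (Fintype.card K - 1) p k ho
  have hone : 1 ≤ Fintype.card K - 1 := by omega
  zify [hone] at hlt
  generalize hT : ((∑ i : Fin (p + 2), k i.castSucc / 2 : ℕ) + (k (Fin.last (p + 2)) : ℤ) + 1) *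
        (((Fintype.card K - 1 : ℕ) : ℤ) - 1) = T at hw
  have hdT : (d : ℤ) + (Fintype.card K - 1 : ℕ) ≤ T := by
    rw [← hT]
    push_cast
    linarith
  obtain ⟨s, hs⟩ := Int.eq_ofNat_of_zero_le (sub_nonneg.2 hdT)
  obtain ⟨b, hb, hχ⟩ := hd (fun e => worst (Fintype.card K - 1) p k e.1 e.2 +
    (Pi.single e₀ (d - T) : _ → ℤ) e) (by
      rw [Finset.sum_add_distrib, hw, Finset.sum_pi_single']; simp)
  have hsing : ∀ (z : ℤ) (e : (i : Fin (p + 2 + 1)) × Fin (k i)),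
      (Pi.single e₀ z : ((i : Fin (p + 2 + 1)) × Fin (k i)) → ℤ) e = if e = e₀ then z else 0 :=
    fun z e => Pi.single_apply e₀ z e
  have h1 := lower_core K p k hk ho he (fun e => (b e : ℤ) + if e = e₀ then (s : ℤ) else 0)
    (by intro e; positivity) ?_ ?_
  · rw [hT, Finset.sum_add_distrib, Finset.sum_ite_eq', if_pos (Finset.mem_univ _),
      ← Nat.cast_sum, hb] at h1
    omega
  · have hc2 := chi_eq_one_of_cast K (parallelComp k)
      (fun e => if e = e₀ then -((Fintype.card K - 1 : ℕ) : ℤ) else 0) (by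
        intro e
        split_ifs
        · rw [Int.cast_neg, Int.cast_natCast, ZMod.natCast_self, neg_zero]
        · simp)
    have hc3 := mul_inv_eq_one.2 hχ.symm
    rw [← Multigraph.chi_neg, ← Multigraph.chi_add] at hc3
    refine Eq.trans ?_ (chi_add_eq_one K (parallelComp k) _ _ hc3 hc2)
    congr 1
    funext e
    simp only [Pi.add_apply, Pi.neg_apply, hsing]
    split_ifs
    · linarith
    · ring
  · rw [← Int.cast_sum, Finset.sum_sub_distrib, hw, Finset.sum_add_distrib, Finset.sum_ite_eq',
      if_pos (Finset.mem_univ _), ← Nat.cast_sum, hb]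
    rw [show (d : ℤ) + s - T = -((Fintype.card K - 1 : ℕ) : ℤ) by linarith,
      Int.cast_neg, Int.cast_natCast, ZMod.natCast_self, neg_zero]
end
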